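/- Let D be a bounded c-John domain in ℝⁿ, n ≥ 2. Let τ, δ ∈ (0,1) and 1 ≤ p < n/δ be given. Then there is a constant C = C(δ, τ, p, n, c) > 0 such that the fractional Sobolev–Poincaré inequality ∫_D |u(x) − u_D|^{np/(n−δp)} dx ≤ C (∫_D ∫_{B(x, τ dist(x,∂D))} |u(x) − u(y)|^p / |x−y|^{n+δp} dy dx)^{n/(n−δp)} holds for every u ∈ L¹(D). -/

import Mathlib

open MeasureTheory Metric Set
open scoped ENNReal NNReal BigOperators

noncomputable section

/-- Euclidean `n`-space. -/
abbrev Eucl (n : ℕ) : Type := EuclideanSpace ℝ (Fin n)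

/-- `D` is a `c`-John domain (bounded or unbounded): an open connected set such that each
pair of points can be joined by a rectifiable curve, parametrized by arc length
(formalized as a `1`-Lipschitz parametrization on `[0, ℓ]`), along which
`dist(γ t, ∂D) ≥ min{t, ℓ - t}/c`. -/
def IsJohnDomain (n : ℕ) (c : ℝ) (D : Set (Eucl n)) : Prop :=
  IsOpen D ∧ IsConnected D ∧
    ∀ x₁ ∈ D, ∀ x₂ ∈ D, ∃ ℓ : ℝ, 0 ≤ ℓ ∧ ∃ γ : ℝ → Eucl n,
      γ 0 = x₁ ∧ γ ℓ = x₂ ∧ (∀ t ∈ Icc (0:ℝ) ℓ, γ t ∈ D) ∧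
      LipschitzOnWith 1 γ (Icc 0 ℓ) ∧
      ∀ t ∈ Icc (0:ℝ) ℓ, min t (ℓ - t) / c ≤ infDist (γ t) (frontier D)

/-- The ball `B(x, τ·dist(x, ∂G))`; by convention, if `∂G = ∅` (i.e. `G = ℝⁿ`)
it is all of `ℝⁿ`. -/
def tauBall (n : ℕ) (τ : ℝ) (G : Set (Eucl n)) (x : Eucl n) : Set (Eucl n) :=
  {y : Eucl n | edist x y < ENNReal.ofReal τ * EMetric.infEdist x (frontier G)}

/-- The fractional kernel `|u x - u y|^p / |x - y|^(n + δp)` as an extended real. -/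
def fracKernel (n : ℕ) (δ p : ℝ) (u : Eucl n → ℝ) (x y : Eucl n) : ℝ≥0∞ :=
  ENNReal.ofReal (|u x - u y| ^ p / dist x y ^ ((n : ℝ) + δ * p))

/-- The `p`-th power of the seminorm `|u|_{W^{δ,p}_τ(G)}`. -/
def fracEnergyTau (n : ℕ) (δ τ p : ℝ) (G : Set (Eucl n)) (u : Eucl n → ℝ) : ℝ≥0∞ :=
  ∫⁻ x in G, ∫⁻ y in tauBall n τ G x, fracKernel n δ p u x y ∂volume ∂volume

/-- The `p`-th power of the seminorm `|u|_{W^{δ,p}(G)}`. -/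
def fracEnergy (n : ℕ) (δ p : ℝ) (G : Set (Eucl n)) (u : Eucl n → ℝ) : ℝ≥0∞ :=
  ∫⁻ x in G, ∫⁻ y in G, fracKernel n δ p u x y ∂volume ∂volume

/-- The fractional `(δ,p)`-capacity of a compact set `K ⊆ G`:
`inf |u|_{W^{δ,p}(G)}^p` over `u ∈ C₀(G)` with `u ≥ 1` on `K`. -/
def fracCap (n : ℕ) (δ p : ℝ) (K G : Set (Eucl n)) : ℝ≥0∞ :=
  ⨅ (u : Eucl n → ℝ) (_ : Continuous u) (_ : HasCompactSupport u) (_ : tsupport u ⊆ G)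
    (_ : ∀ x ∈ K, 1 ≤ u x), fracEnergy n δ p G u

/-- The fractional `(δ,q,p)`-Hardy inequality holds in `G` with constant `C`. -/
def HasFracHardy (n : ℕ) (δ p q C : ℝ) (G : Set (Eucl n)) : Prop :=
  ∀ u : Eucl n → ℝ, Continuous u → HasCompactSupport u → tsupport u ⊆ G →
    (∫⁻ x in G, ENNReal.ofReal
        (|u x| ^ q / infDist x (frontier G) ^ (q * (δ + n * (1/q - 1/p)))) ∂volume)
      ≤ ENNReal.ofReal C * fracEnergy n δ p G u ^ (q / p)

/-- The closed axis-parallel cube with center `z` and half side length `r`. -/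
def cube (n : ℕ) (z : Eucl n) (r : ℝ) : Set (Eucl n) :=
  {x : Eucl n | ∀ i, |x i - z i| ≤ r}

/-- The quantity `|Q|^(-1-δ/n) ∫_Q |u - u_Q|` for the cube `Q = cube n z r`. -/
def aTerm (n : ℕ) (δ : ℝ) (u : Eucl n → ℝ) (z : Eucl n) (r : ℝ) : ℝ :=
  ((volume (cube n z r)).toReal) ^ (-(1:ℝ) - δ / n) *
    ∫ x in cube n z r, |u x - ⨍ y in cube n z r, u y ∂volume| ∂volume

/-- The seminorm `|u|_{A^{δ,p}_κ(G)}`: the supremum, over families `𝒬` of pairwise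
disjoint cubes `Q` (given by center-halfside pairs) with `κQ ⊆ G`, of the `L^p(G)`
norm of `∑_{Q ∈ 𝒬} (|Q|^(-1-δ/n) ∫_Q |u - u_Q|) χ_Q`. -/
def ASeminorm (n : ℕ) (κ δ p : ℝ) (G : Set (Eucl n)) (u : Eucl n → ℝ) : ℝ≥0∞ :=
  ⨆ (𝒬 : Set (Eucl n × ℝ)) (_ : ∀ c ∈ 𝒬, 0 < c.2 ∧ cube n c.1 (κ * c.2) ⊆ G)
    (_ : ∀ c ∈ 𝒬, ∀ c' ∈ 𝒬, c ≠ c' → cube n c.1 c.2 ∩ cube n c'.1 c'.2 = ∅),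
    (∫⁻ x in G,
        (∑' c : 𝒬, (cube n (c : Eucl n × ℝ).1 (c : Eucl n × ℝ).2).indicator
          (fun _ => ENNReal.ofReal (aTerm n δ u (c : Eucl n × ℝ).1 (c : Eucl n × ℝ).2)) x) ^ p
      ∂volume) ^ (1 / p)

/-- `Q` is a closed dyadic cube in `ℝⁿ`. -/
def IsDyadicCube (n : ℕ) (Q : Set (Eucl n)) : Prop :=
  ∃ (k : ℤ) (z : Fin n → ℤ),
    Q = {x : Eucl n | ∀ i, (z i : ℝ) * (2:ℝ) ^ k ≤ x i ∧ x i ≤ ((z i : ℝ) + 1) * (2:ℝ) ^ k}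

/-- `W` is a Whitney decomposition of the proper open set `G`: a countable family of
closed dyadic cubes with pairwise disjoint interiors whose union is `G`, with
`diam Q ≤ dist(Q, ∂G) ≤ 4 diam Q` for each cube `Q ∈ W`. -/
def IsWhitneyDecomposition (n : ℕ) (G : Set (Eucl n)) (W : Set (Set (Eucl n))) : Prop :=
  W.Countable ∧ (∀ Q ∈ W, IsDyadicCube n Q) ∧ ⋃₀ W = G ∧
    (W.Pairwise fun Q R => interior Q ∩ interior R = ∅) ∧
    ∀ Q ∈ W, (∀ x ∈ Q, Metric.diam Q ≤ infDist x (frontier G)) ∧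
      ∃ x ∈ Q, infDist x (frontier G) ≤ 4 * Metric.diam Q

/-- `lam` is an upper Assouad-type covering exponent for `E`: there is `C > 0` such
that for every `x ∈ E` and all `0 < r < R < 2 diam E`, the set `E ∩ B(x,R)` can be
covered by at most `C (R/r)^lam` balls centered in `E` of radius `r`. -/
def UpperAssouadBound (n : ℕ) (E : Set (Eucl n)) (lam : ℝ) : Prop :=
  ∃ C : ℝ, 0 < C ∧ ∀ x ∈ E, ∀ r R : ℝ, 0 < r → r < R →
    ENNReal.ofReal R < 2 * EMetric.diam E →
    ∃ F : Finset (Eucl n), ↑F ⊆ E ∧ (F.card : ℝ) ≤ C * (R / r) ^ lam ∧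
      E ∩ ball x R ⊆ ⋃ y ∈ F, ball y r

/-- The upper Assouad dimension of `E`. -/
def upperAssouadDim (n : ℕ) (E : Set (Eucl n)) : ℝ :=
  sInf {lam : ℝ | 0 ≤ lam ∧ UpperAssouadBound n E lam}

/-- `lam` is a lower Assouad-type exponent for `E`: there is `C > 0` such that for
every `x ∈ E` and all `0 < r < R < 2 diam E`, at least `C (R/r)^lam` balls centered
in `E` of radius `r` are needed to cover `E ∩ B(x,R)`. -/
def LowerAssouadBound (n : ℕ) (E : Set (Eucl n)) (lam : ℝ) : Prop :=
  ∃ C : ℝ, 0 < C ∧ ∀ x ∈ E, ∀ r R : ℝ, 0 < r → r < R →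
    ENNReal.ofReal R < 2 * EMetric.diam E →
    ∀ F : Finset (Eucl n), ↑F ⊆ E → (E ∩ ball x R ⊆ ⋃ y ∈ F, ball y r) →
      C * (R / r) ^ lam ≤ (F.card : ℝ)

/-- The lower Assouad dimension of `E`. -/
def lowerAssouadDim (n : ℕ) (E : Set (Eucl n)) : ℝ :=
  sSup {lam : ℝ | 0 ≤ lam ∧ LowerAssouadBound n E lam}

end

/-!
Each point `x` of a John domain is the end of a chain of balls `B(γ t, κ t)` running to a central
ball `B₀` along a curve `γ` whose distance to the boundary grows linearly. Comparing averages of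
`u` along the chain, with the fractional Poincaré inequality on each ball, bounds
`|u x - u_{B₀}|` by a Wolff-type potential of the energy density. Splitting that potential at a
suitable radius gives a weak-type estimate. Following Maz'ya, the weak-type estimate is then
applied to the dyadic truncations of `|u - u_{B₀}|`; their energies add up to at most the energy
of `u`, so summing over the levels yields the strong-type estimate. Replacing `u_{B₀}` by `u_D`
costs a factor `2 ^ q` in the `L^q` estimate.
-/

section Jensen

variable {α E : Type*} [MeasurableSpace α] [NormedAddCommGroup E] {μ : Measure α} {p : ℝ}

lemma laverage_rpow_le [IsFiniteMeasure μ] {f : α → ℝ≥0∞} (hf : AEMeasurable f μ) (hp : 1 ≤ p) :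
    (⨍⁻ x, f x ∂μ) ^ p ≤ ⨍⁻ x, f x ^ p ∂μ := by
  have hp0 : 0 < p := one_pos.trans_le hp
  rcases eq_zero_or_neZero μ with rfl | _
  · simp [hp0]
  have h := eLpNorm'_le_eLpNorm'_of_exponent_le one_pos hp ((μ univ)⁻¹ • μ)
    (hf.smul_measure (μ univ)⁻¹).aestronglyMeasurable
  simp only [eLpNorm', enorm_eq_self, ENNReal.rpow_one, div_one] at h
  rwa [one_div, ENNReal.le_rpow_inv_iff hp0] at h

lemma enorm_average_le [NormedSpace ℝ E] (f : α → E) :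
    ‖⨍ x, f x ∂μ‖ₑ ≤ ⨍⁻ x, ‖f x‖ₑ ∂μ :=
  enorm_integral_le_lintegral_enorm f

lemma enorm_sub_average_rpow_le [NormedSpace ℝ E] [CompleteSpace E] [IsFiniteMeasure μ] [NeZero μ]
    {u : α → E} (hu : Integrable u μ) (a : E) (hp : 1 ≤ p) :
    ‖a - ⨍ x, u x ∂μ‖ₑ ^ p ≤ ⨍⁻ x, ‖a - u x‖ₑ ^ p ∂μ := by
  have hmean : a - ⨍ x, u x ∂μ = ⨍ x, (a - u x) ∂μ := by
    have h := integral_sub (integrable_const (μ := (μ univ)⁻¹ • μ) a) hu.to_average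
    simpa only [average, integral_const, probReal_univ, one_smul] using h.symm
  calc ‖a - ⨍ x, u x ∂μ‖ₑ ^ p ≤ (⨍⁻ x, ‖a - u x‖ₑ ∂μ) ^ p := by
        rw [hmean]
        gcongr
        exact enorm_average_le _
    _ ≤ ⨍⁻ x, ‖a - u x‖ₑ ^ p ∂μ :=
        laverage_rpow_le (aestronglyMeasurable_const.sub hu.1).enorm hp

lemma enorm_average_sub_rpow_le [NormedSpace ℝ E] [CompleteSpace E] [IsFiniteMeasure μ] [NeZero μ]
    {u : α → E} (hu : Integrable u μ) (a : E) (hp : 1 ≤ p) :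
    ‖⨍ x, u x ∂μ - a‖ₑ ^ p ≤ ⨍⁻ x, ‖u x - a‖ₑ ^ p ∂μ := by
  simpa only [enorm_sub_rev a] using enorm_sub_average_rpow_le hu a hp

lemma lintegral_enorm_sub_average_rpow_le [NormedSpace ℝ E] [CompleteSpace E] [IsFiniteMeasure μ]
    {u : α → E} (hu : Integrable u μ) (b : E) (hp : 1 ≤ p) :
    ∫⁻ x, ‖u x - ⨍ y, u y ∂μ‖ₑ ^ p ∂μ ≤ 2 ^ p * ∫⁻ x, ‖u x - b‖ₑ ^ p ∂μ := by
  rcases eq_zero_or_neZero μ with rfl | _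
  · simp
  set a := ⨍ y, u y ∂μ
  have hpoint (x : α) : ‖u x - a‖ₑ ^ p ≤ 2 ^ (p - 1) * (‖u x - b‖ₑ ^ p + ‖a - b‖ₑ ^ p) :=
    calc ‖u x - a‖ₑ ^ p ≤ (‖u x - b‖ₑ + ‖a - b‖ₑ) ^ p := by
          gcongr
          rw [← sub_sub_sub_cancel_right (u x) a b]
          exact enorm_sub_le
      _ ≤ _ := ENNReal.rpow_add_le_mul_rpow_add_rpow _ _ hp
  calc ∫⁻ x, ‖u x - a‖ₑ ^ p ∂μ
      ≤ ∫⁻ x, 2 ^ (p - 1) * (‖u x - b‖ₑ ^ p + ‖a - b‖ₑ ^ p) ∂μ := lintegral_mono hpoint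
    _ = 2 ^ (p - 1) * (∫⁻ x, ‖u x - b‖ₑ ^ p ∂μ + ‖a - b‖ₑ ^ p * μ univ) := by
        rw [lintegral_const_mul' _ _ (by simp), lintegral_add_right _ measurable_const,
          lintegral_const]
    _ ≤ 2 ^ (p - 1) * (∫⁻ x, ‖u x - b‖ₑ ^ p ∂μ + ∫⁻ x, ‖u x - b‖ₑ ^ p ∂μ) := by
        gcongr
        rw [← measure_mul_laverage μ fun x => ‖u x - b‖ₑ ^ p, mul_comm]
        gcongr
        exact enorm_average_sub_rpow_le hu b hp
    _ = 2 ^ p * ∫⁻ x, ‖u x - b‖ₑ ^ p ∂μ := by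
        rw [← two_mul, ← mul_assoc]
        congr 1
        nth_rw 2 [← ENNReal.rpow_one 2]
        rw [← ENNReal.rpow_add _ _ two_ne_zero ENNReal.ofNat_ne_top, sub_add_cancel]

end Jensen

section JohnGeometry

lemma closedBall_subset_of_lt_infDist_frontier {E : Type*} [NormedAddCommGroup E]
    [NormedSpace ℝ E] {D : Set E} (hD : IsOpen D) {x : E} (hx : x ∈ D) {r : ℝ}
    (hr : r < infDist x (frontier D)) : closedBall x r ⊆ D := by
  rcases lt_or_ge r 0 with hr0 | hr0
  · simp [closedBall_eq_empty.2 hr0]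
  refine (convex_closedBall x r).isPreconnected.subset_of_closure_inter_subset hD
    ⟨x, mem_closedBall_self hr0, hx⟩ fun y hy => ?_
  by_contra hyD
  have hyfr : y ∈ frontier D := hD.frontier_eq ▸ ⟨hy.1, hyD⟩
  exact hr.not_ge ((infDist_le_dist_of_mem hyfr).trans (mem_closedBall'.1 hy.2))

lemma infDist_frontier_pos {X : Type*} [PseudoMetricSpace X] {D : Set X} (hD : IsOpen D)
    (hfr : (frontier D).Nonempty) {x : X} (hx : x ∈ D) : 0 < infDist x (frontier D) :=
  (isClosed_frontier.notMem_iff_infDist_pos hfr).1 fun h => (hD.frontier_eq ▸ h).2 hx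

lemma exists_isMaxOn_infDist_frontier {X : Type*} [PseudoMetricSpace X] [ProperSpace X] {D : Set X}
    (hD : IsOpen D) (hb : Bornology.IsBounded D) (hne : D.Nonempty) (hfr : (frontier D).Nonempty) :
    ∃ x₀ ∈ D, IsMaxOn (fun x => infDist x (frontier D)) D x₀ := by
  obtain ⟨x₀, hx₀, hmax⟩ := hb.isCompact_closure.exists_isMaxOn hne.closure
    (continuous_infDist_pt (frontier D)).continuousOn
  refine ⟨x₀, ?_, hmax.on_subset subset_closure⟩
  by_contra hx₀D
  have hzero : infDist x₀ (frontier D) = 0 :=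
    infDist_zero_of_mem (hD.frontier_eq ▸ ⟨hx₀, hx₀D⟩)
  obtain ⟨x, hx⟩ := hne
  exact ((infDist_frontier_pos hD hfr hx).trans_le (hmax (subset_closure hx))).ne' hzero

lemma le_four_mul_sq_mul_infDist {X : Type*} [PseudoMetricSpace X] {S : Set X} {γ : ℝ → X}
    {c l t : ℝ} (hc : 1 ≤ c) (hγ : LipschitzOnWith 1 γ (Icc 0 l))
    (hJohn : min t (l - t) / c ≤ infDist (γ t) S) (hl : l ≤ 2 * c * infDist (γ l) S)
    (ht : t ∈ Icc 0 l) : t ≤ 4 * c ^ 2 * infDist (γ t) S := by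
  have hdist : infDist (γ l) S ≤ infDist (γ t) S + (l - t) := by
    have h := hγ.dist_le_mul l ⟨ht.1.trans ht.2, le_rfl⟩ t ht
    rw [NNReal.coe_one, one_mul, Real.dist_eq, abs_of_nonneg (sub_nonneg.2 ht.2)] at h
    exact infDist_le_infDist_add_dist.trans (by gcongr)
  have hI : 0 ≤ infDist (γ t) S := infDist_nonneg
  rw [div_le_iff₀ (one_pos.trans_le hc)] at hJohn
  rcases min_choice t (l - t) with hmin | hmin <;> rw [hmin] at hJohn
  · nlinarith [mul_nonneg hI (show 0 ≤ c * (c - 1) by nlinarith)]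
  · have hcenter : infDist (γ l) S ≤ 2 * c * infDist (γ t) S := by nlinarith
    nlinarith [mul_le_mul_of_nonneg_left hcenter (show 0 ≤ 2 * c by linarith), ht.2]

/-- An open set `D` each of whose points `x` is joined to the fixed center `x₀` by a curve along
which the distance to the boundary grows at least linearly, with slope `1 / C`, in the parameter.
All curves are parametrized on the same interval `[0, L]`; a shorter curve rests at `x₀`. -/
structure IsCenteredJohn {X : Type*} [PseudoMetricSpace X] (C L : ℝ) (x₀ : X) (D : Set X) :
    Prop where
  isOpen : IsOpen D
  frontier_nonempty : (frontier D).Nonempty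
  length_pos : 0 < L
  exists_curve : ∀ x ∈ D, ∃ γ : ℝ → X, γ 0 = x ∧ γ L = x₀ ∧ LipschitzOnWith 1 γ (Icc 0 L) ∧
    ∀ t ∈ Icc 0 L, γ t ∈ D ∧ t / C ≤ infDist (γ t) (frontier D)

namespace IsCenteredJohn

variable {X : Type*} [PseudoMetricSpace X] {C L : ℝ} {x₀ : X} {D : Set X}

lemma subset_closedBall (h : IsCenteredJohn C L x₀ D) : D ⊆ closedBall x₀ L := by
  intro x hx
  obtain ⟨γ, rfl, rfl, hγ, -⟩ := h.exists_curve x hx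
  simpa [abs_of_pos h.length_pos] using
    hγ.dist_le_mul 0 ⟨le_rfl, h.length_pos.le⟩ L ⟨h.length_pos.le, le_rfl⟩

lemma nonempty (h : IsCenteredJohn C L x₀ D) : D.Nonempty := by
  by_contra hD
  simpa [not_nonempty_iff_eq_empty.1 hD] using h.frontier_nonempty

lemma center_mem (h : IsCenteredJohn C L x₀ D) : x₀ ∈ D := by
  obtain ⟨x, hx⟩ := h.nonempty
  obtain ⟨γ, -, rfl, -, hγ⟩ := h.exists_curve x hx
  exact (hγ L ⟨h.length_pos.le, le_rfl⟩).1

lemma length_div_le_infDist_center (h : IsCenteredJohn C L x₀ D) :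
    L / C ≤ infDist x₀ (frontier D) := by
  obtain ⟨γ, -, rfl, -, hγ⟩ := h.exists_curve x₀ h.center_mem
  exact (hγ L ⟨h.length_pos.le, le_rfl⟩).2

end IsCenteredJohn

lemma lipschitzOnWith_comp_min {X : Type*} [PseudoMetricSpace X] {γ : ℝ → X} {l : ℝ}
    {K : ℝ≥0} (hl : 0 ≤ l) (hγ : LipschitzOnWith K γ (Icc 0 l)) (L : ℝ) :
    LipschitzOnWith K (fun t => γ (min t l)) (Icc 0 L) := by
  have hmin : LipschitzOnWith 1 (fun t : ℝ => min t l) (Icc 0 L) :=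
    (LipschitzWith.id.min_const l).lipschitzOnWith
  simpa only [mul_one, Function.comp_def] using
    hγ.comp hmin fun t ht => ⟨le_min ht.1 hl, min_le_right _ _⟩

lemma IsJohnDomain.exists_isCenteredJohn {n : ℕ} {c : ℝ} {D : Set (Eucl n)}
    (hJ : IsJohnDomain n c D) (hn : 0 < n) (hc : 1 ≤ c) (hb : Bornology.IsBounded D) :
    ∃ L x₀, IsCenteredJohn (4 * c ^ 2) L x₀ D := by
  obtain ⟨hopen, hconn, hcurve⟩ := hJ
  have : Nonempty (Fin n) := ⟨⟨0, hn⟩⟩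
  have hfr : (frontier D).Nonempty := nonempty_frontier_iff.2
    ⟨hconn.nonempty, fun h => NormedSpace.unbounded_univ ℝ (Eucl n) (h ▸ hb)⟩
  obtain ⟨x₀, hx₀, hmax⟩ := exists_isMaxOn_infDist_frontier hopen hb hconn.nonempty hfr
  have hd : 0 < infDist x₀ (frontier D) := infDist_frontier_pos hopen hfr hx₀
  have hc0 : 0 < c := one_pos.trans_le hc
  refine ⟨4 * c ^ 2 * infDist x₀ (frontier D), x₀, hopen, hfr, by positivity, fun x hx => ?_⟩
  obtain ⟨l, hl, γ, rfl, rfl, hmem, hlip, hJohn⟩ := hcurve x hx x₀ hx₀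
  have hlength : l ≤ 2 * c * infDist (γ l) (frontier D) := by
    have hmid : l / 2 ∈ Icc 0 l := ⟨by linarith, by linarith⟩
    have h := (hJohn _ hmid).trans (hmax (hmem _ hmid))
    rw [sub_half, min_self, div_le_iff₀ hc0] at h
    linarith
  have hlL : l ≤ 4 * c ^ 2 * infDist (γ l) (frontier D) := by nlinarith
  refine ⟨fun t => γ (min t l), by simp [hl], by simp [hlL],
    lipschitzOnWith_comp_min hl hlip _, fun t ht => ?_⟩
  have htl : min t l ∈ Icc 0 l := ⟨le_min ht.1 hl, min_le_right _ _⟩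
  refine ⟨hmem _ htl, ?_⟩
  rw [div_le_iff₀' (by positivity)]
  rcases le_total t l with h | h
  · simp only [min_eq_left h] at htl ⊢
    exact le_four_mul_sq_mul_infDist hc hlip (hJohn t htl) hlength htl
  · simpa only [min_eq_right h] using ht.2

end JohnGeometry

section LocalPoincare

variable {n : ℕ} {δ τ p : ℝ} {D : Set (Eucl n)} {u : Eucl n → ℝ}

lemma mem_tauBall_iff (hτ : 0 ≤ τ) (hfr : (frontier D).Nonempty) {y z : Eucl n} :
    z ∈ tauBall n τ D y ↔ dist y z < τ * infDist y (frontier D) := by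
  change edist y z < ENNReal.ofReal τ * infEDist y (frontier D) ↔ _
  rw [infDist, ← ENNReal.ofReal_lt_ofReal_iff_of_nonneg dist_nonneg, ENNReal.ofReal_mul hτ,
    ENNReal.ofReal_toReal (infEDist_ne_top hfr), edist_dist]

lemma tauBall_subset (hτ : τ ∈ Ioo (0 : ℝ) 1) (hD : IsOpen D) (hfr : (frontier D).Nonempty)
    {y : Eucl n} (hy : y ∈ D) : tauBall n τ D y ⊆ D := by
  intro z hz
  have hdist : dist y z < infDist y (frontier D) :=
    ((mem_tauBall_iff hτ.1.le hfr).1 hz).trans_le (mul_le_of_le_one_left infDist_nonneg hτ.2.le)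
  exact closedBall_subset_of_lt_infDist_frontier hD hy hdist (mem_closedBall'.2 le_rfl)

lemma measurableSet_tauBall (n : ℕ) (τ : ℝ) (D : Set (Eucl n)) :
    MeasurableSet {q : Eucl n × Eucl n | q.2 ∈ tauBall n τ D q.1} :=
  measurableSet_lt (measurable_fst.edist measurable_snd)
    ((continuous_infEDist.measurable.comp measurable_fst).const_mul _)

lemma measurable_fracKernel (hu : Measurable u) :
    Measurable fun q : Eucl n × Eucl n => fracKernel n δ p u q.1 q.2 := by
  unfold fracKernel
  fun_prop

/-- The integrand of `fracEnergyTau` extended by zero outside `D`, so that the energy becomes an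
integral over the whole space. -/
noncomputable def energyDensity (n : ℕ) (δ τ p : ℝ) (D : Set (Eucl n)) (u : Eucl n → ℝ) :
    Eucl n → ℝ≥0∞ :=
  D.indicator fun y => ∫⁻ z in tauBall n τ D y, fracKernel n δ p u y z

lemma measurable_energyDensity (hD : MeasurableSet D) (hu : Measurable u) :
    Measurable (energyDensity n δ τ p D u) := by
  refine Measurable.indicator ?_ hD
  have hslice (y : Eucl n) : MeasurableSet (tauBall n τ D y) :=
    measurable_prodMk_left (measurableSet_tauBall n τ D)
  simp_rw [← lintegral_indicator (hslice _)]
  exact ((measurable_fracKernel hu).indicator (measurableSet_tauBall n τ D)).lintegral_prod_right'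

lemma lintegral_energyDensity (hD : MeasurableSet D) :
    ∫⁻ y, energyDensity n δ τ p D u y = fracEnergyTau n δ τ p D u :=
  lintegral_indicator hD _

lemma enorm_sub_rpow_le_mul_fracKernel (hp : 0 < p) (hδ : 0 ≤ δ) {y z : Eucl n} {R : ℝ}
    (hR : dist y z ≤ R) :
    ‖u y - u z‖ₑ ^ p ≤ ENNReal.ofReal (R ^ ((n : ℝ) + δ * p)) * fracKernel n δ p u y z := by
  have hR0 : 0 ≤ R := dist_nonneg.trans hR
  rw [fracKernel, ← ENNReal.ofReal_mul (by positivity), Real.enorm_eq_ofReal_abs,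
    ENNReal.ofReal_rpow_of_nonneg (abs_nonneg _) hp.le]
  apply ENNReal.ofReal_le_ofReal
  rcases eq_or_ne y z with rfl | hne
  · simp [Real.zero_rpow hp.ne']
  · have hyz : 0 < dist y z := dist_pos.2 hne
    rw [mul_div_assoc', le_div_iff₀ (by positivity), mul_comm]
    gcongr

lemma volume_closedBall_eq (x : Eucl n) {r : ℝ} (hr : 0 ≤ r) :
    volume (closedBall x r) =
      ENNReal.ofReal (volume.real (ball (0 : Eucl n) 1) * r ^ n) := by
  rw [Measure.addHaar_closedBall _ _ hr, finrank_euclideanSpace_fin, mul_comm,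
    ENNReal.ofReal_mul measureReal_nonneg, ofReal_measureReal]

lemma closedBall_subset_of_eight_mul_le (hD : IsOpen D) (hτ : τ ≤ 1) {x : Eucl n} (hx : x ∈ D)
    {r : ℝ} (hr : 0 < r) (hxr : 8 * r ≤ τ * infDist x (frontier D)) : closedBall x r ⊆ D :=
  closedBall_subset_of_lt_infDist_frontier hD hx <| by
    nlinarith [infDist_nonneg (x := x) (s := frontier D)]

lemma mem_tauBall_of_mem_closedBall (hτ : τ ∈ Ioo (0 : ℝ) 1) (hfr : (frontier D).Nonempty)
    {x y z : Eucl n} {r : ℝ} (hr : 0 < r) (hxr : 8 * r ≤ τ * infDist x (frontier D))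
    (hy : y ∈ closedBall x r) (hyz : dist y z ≤ 3 * r) : z ∈ tauBall n τ D y := by
  have hxy : infDist x (frontier D) ≤ infDist y (frontier D) + r :=
    infDist_le_infDist_add_dist.trans (by gcongr; exact mem_closedBall'.1 hy)
  rw [mem_tauBall_iff hτ.1.le hfr]
  nlinarith [hτ.1, hτ.2]

lemma setLIntegral_enorm_sub_rpow_le (hδ : 0 ≤ δ) (hp : 0 < p) {y : Eucl n} (hy : y ∈ D) {R : ℝ}
    {B : Set (Eucl n)} (hB : MeasurableSet B) (hBR : ∀ z ∈ B, dist y z ≤ R)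
    (hBτ : B ⊆ tauBall n τ D y) :
    ∫⁻ z in B, ‖u y - u z‖ₑ ^ p ≤
      ENNReal.ofReal (R ^ ((n : ℝ) + δ * p)) * energyDensity n δ τ p D u y := by
  calc ∫⁻ z in B, ‖u y - u z‖ₑ ^ p
      ≤ ∫⁻ z in B, ENNReal.ofReal (R ^ ((n : ℝ) + δ * p)) * fracKernel n δ p u y z :=
        setLIntegral_mono' hB fun z hz => enorm_sub_rpow_le_mul_fracKernel hp hδ (hBR z hz)
    _ = ENNReal.ofReal (R ^ ((n : ℝ) + δ * p)) * ∫⁻ z in B, fracKernel n δ p u y z :=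
        lintegral_const_mul' _ _ ENNReal.ofReal_ne_top
    _ ≤ _ := by
        rw [energyDensity, indicator_of_mem hy]
        gcongr

/-- The constant of the fractional Poincaré inequality on balls, `s` being the differential order
`δ * p`. The factor `3 ^ (n + s)` bounds the kernel at distances up to `3 * r`; the other
factors are reciprocals of the volumes of two balls of radii `r` and `r / 2`. -/
noncomputable def poincareConst (n : ℕ) (s : ℝ) : ℝ≥0 :=
  (3 ^ ((n : ℝ) + s) * 2 ^ n / volume.real (ball (0 : Eucl n) 1) ^ 2).toNNReal

lemma volume_inv_mul_le_poincareConst (s : ℝ) (x x' : Eucl n) {r r' : ℝ} (hr : 0 < r)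
    (hr' : r / 2 ≤ r') :
    (volume (closedBall x r))⁻¹ * (volume (closedBall x' r'))⁻¹ *
      ENNReal.ofReal ((3 * r) ^ ((n : ℝ) + s)) ≤
        ENNReal.ofReal r ^ (-((n : ℝ) - s)) * poincareConst n s := by
  have hr0 : 0 < r' := by linarith
  set ω := volume.real (ball (0 : Eucl n) 1) with hω_def
  have hω : 0 < ω :=
    ENNReal.toReal_pos (measure_ball_pos volume _ one_pos).ne' measure_ball_lt_top.ne
  have hpow : (3 * r) ^ ((n : ℝ) + s) =
      3 ^ ((n : ℝ) + s) * (r ^ (-((n : ℝ) - s)) * (r ^ n * r ^ n)) := by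
    rw [Real.mul_rpow (by norm_num) hr.le, ← Real.rpow_natCast, ← Real.rpow_add hr,
      ← Real.rpow_add hr]
    ring_nf
  rw [volume_closedBall_eq x hr.le, volume_closedBall_eq x' hr0.le, poincareConst, ← hω_def,
    ENNReal.ofReal_rpow_of_pos hr, ← ENNReal.ofReal_inv_of_pos (by positivity),
    ← ENNReal.ofReal_inv_of_pos (by positivity), ← ENNReal.ofReal_mul (by positivity),
    ← ENNReal.ofReal_mul (by positivity), ← ENNReal.ofReal,
    ← ENNReal.ofReal_mul (by positivity)]
  apply ENNReal.ofReal_le_ofReal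
  calc (ω * r ^ n)⁻¹ * (ω * r' ^ n)⁻¹ * (3 * r) ^ ((n : ℝ) + s)
      ≤ (ω * r ^ n)⁻¹ * (ω * (r / 2) ^ n)⁻¹ * (3 * r) ^ ((n : ℝ) + s) := by gcongr
    _ = _ := by rw [hpow, div_pow]; field_simp

lemma enorm_sub_setAverage_rpow_le (hτ : τ ∈ Ioo (0 : ℝ) 1) (hδ : 0 ≤ δ) (hp : 1 ≤ p)
    (hD : IsOpen D) (hfr : (frontier D).Nonempty) (hu : LocallyIntegrable u) {x x' y : Eucl n}
    (hx : x ∈ D) {r r' : ℝ} (hr : 0 < r) (hxr : 8 * r ≤ τ * infDist x (frontier D))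
    (hr' : 0 < r') (hxx' : dist x x' + r' ≤ 2 * r) (hy : y ∈ closedBall x r) :
    ‖u y - ⨍ z in closedBall x' r', u z‖ₑ ^ p ≤ (volume (closedBall x' r'))⁻¹ *
      (ENNReal.ofReal ((3 * r) ^ ((n : ℝ) + δ * p)) * energyDensity n δ τ p D u y) := by
  have : IsFiniteMeasure (volume.restrict (closedBall x' r')) :=
    isFiniteMeasure_restrict.2 measure_closedBall_lt_top.ne
  have : NeZero (volume.restrict (closedBall x' r')) :=
    ⟨by simpa using (measure_closedBall_pos volume x' hr').ne'⟩
  have hyB : ∀ z ∈ closedBall x' r', dist y z ≤ 3 * r := fun z hz => by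
    have htriangle := dist_triangle4 y x x' z
    have hyx := mem_closedBall.1 hy
    have hzx' := mem_closedBall'.1 hz
    linarith
  refine (enorm_sub_average_rpow_le
    (hu.integrableOn_isCompact (isCompact_closedBall _ _)) (u y) hp).trans ?_
  rw [setLAverage_eq, ENNReal.div_eq_inv_mul]
  gcongr
  exact setLIntegral_enorm_sub_rpow_le hδ (one_pos.trans_le hp)
    (closedBall_subset_of_eight_mul_le hD hτ.2.le hx hr hxr hy) measurableSet_closedBall hyB
    fun z hz => mem_tauBall_of_mem_closedBall hτ hfr hr hxr hy (hyB z hz)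

lemma laverage_enorm_sub_average_rpow_le (hτ : τ ∈ Ioo (0 : ℝ) 1) (hδ : 0 ≤ δ) (hp : 1 ≤ p)
    (hD : IsOpen D) (hfr : (frontier D).Nonempty) (hu : LocallyIntegrable u) {x x' : Eucl n}
    (hx : x ∈ D) {r r' : ℝ} (hr : 0 < r) (hxr : 8 * r ≤ τ * infDist x (frontier D))
    (hr' : r / 2 ≤ r') (hxx' : dist x x' + r' ≤ 2 * r) :
    ⨍⁻ y in closedBall x r, ‖u y - ⨍ z in closedBall x' r', u z‖ₑ ^ p ∂volume ≤
      ENNReal.ofReal r ^ (-((n : ℝ) - δ * p)) *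
        (poincareConst n (δ * p) * ∫⁻ y in closedBall x r, energyDensity n δ τ p D u y) := by
  have hr0 : 0 < r' := by linarith
  have hvol : (volume (closedBall x' r'))⁻¹ ≠ ⊤ :=
    ENNReal.inv_ne_top.2 (measure_closedBall_pos volume x' hr0).ne'
  calc ⨍⁻ y in closedBall x r, ‖u y - ⨍ z in closedBall x' r', u z‖ₑ ^ p ∂volume
      ≤ (volume (closedBall x r))⁻¹ * ∫⁻ y in closedBall x r, (volume (closedBall x' r'))⁻¹ *
        (ENNReal.ofReal ((3 * r) ^ ((n : ℝ) + δ * p)) * energyDensity n δ τ p D u y) := by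
        rw [setLAverage_eq, ENNReal.div_eq_inv_mul]
        gcongr _ * ?_
        exact setLIntegral_mono' measurableSet_closedBall fun y hy =>
          enorm_sub_setAverage_rpow_le hτ hδ hp hD hfr hu hx hr hxr hr0 hxx' hy
    _ = (volume (closedBall x r))⁻¹ * (volume (closedBall x' r'))⁻¹ *
        ENNReal.ofReal ((3 * r) ^ ((n : ℝ) + δ * p)) *
          ∫⁻ y in closedBall x r, energyDensity n δ τ p D u y := by
        rw [lintegral_const_mul' _ _ hvol, lintegral_const_mul' _ _ ENNReal.ofReal_ne_top]
        ring
    _ ≤ _ := by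
        rw [← mul_assoc]
        gcongr ?_ * _
        exact volume_inv_mul_le_poincareConst _ x x' hr hr'

end LocalPoincare

section WolffPotential

lemma exists_le_of_tsum_le_tsum {ι : Type*} [Nonempty ι] {θ a : ι → ℝ≥0∞}
    (hθ : ∑' i, θ i ≠ ⊤) (h : ∑' i, θ i ≤ ∑' i, a i) : ∃ i, θ i ≤ a i := by
  by_contra! hlt
  have ha : ∑' i, a i ≠ ⊤ := ne_top_of_le_ne_top hθ (ENNReal.tsum_le_tsum fun i => (hlt i).le)
  exact h.not_gt (ENNReal.tsum_lt_tsum ha (fun i => (hlt i).le) (hlt (Classical.arbitrary ι)))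

lemma mul_rpow_two_mul_div_rpow {p : ℝ} (hp : 0 ≤ p) {M a c s : ℝ≥0∞} (ha0 : a ≠ 0) (ha : a ≠ ⊤)
    (hs0 : s ≠ 0) (hs : s ≠ ⊤) :
    M * a ^ (2 * p) / (s * c * a) ^ p = (c ^ p)⁻¹ * (M / s ^ p) * a ^ p := by
  have hap0 : a ^ p ≠ 0 := by simp [ha0, ha]
  have hap : a ^ p ≠ ⊤ := by finiteness
  rw [ENNReal.mul_rpow_of_nonneg _ _ hp, ENNReal.mul_rpow_of_nonneg _ _ hp, two_mul,
    ENNReal.rpow_add_of_nonneg _ _ hp hp, ← mul_assoc, ENNReal.mul_div_mul_right _ _ hap0 hap,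
    div_eq_mul_inv, ENNReal.mul_inv (by simp [hs0, hs]) (by simp [hs, hs0]), div_eq_mul_inv]
  ring

lemma meas_ge_tsum_rpow_le {α : Type*} [MeasurableSpace α] {μ : Measure α} {F : ℕ → α → ℝ≥0∞}
    (hF : ∀ i, AEMeasurable (F i) μ) {p : ℝ} (hp : 0 < p) {M ν s : ℝ≥0∞} (hν0 : ν ≠ 0) (hν : ν < 1)
    (hs0 : s ≠ 0) (hs : s ≠ ⊤) (hFM : ∀ i, ∫⁻ x, F i x ∂μ ≤ M * (ν ^ i) ^ (2 * p)) :
    μ {x | s ≤ ∑' i, F i x ^ (1 / p)} ≤ ((1 - ν) ^ p * (1 - ν ^ p))⁻¹ * (M / s ^ p) := by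
  have hν1 : 1 - ν ≠ 0 := (tsub_pos_of_lt hν).ne'
  have hνtop : ν ≠ ⊤ := hν.ne_top
  set θ : ℕ → ℝ≥0∞ := fun i => s * (1 - ν) * ν ^ i
  have hθ0 (i : ℕ) : θ i ≠ 0 := by positivity
  have hθtop (i : ℕ) : θ i ≠ ⊤ := by finiteness
  have hθsum : ∑' i, θ i = s := by
    rw [ENNReal.tsum_mul_left, ENNReal.tsum_geometric, mul_assoc,
      ENNReal.mul_inv_cancel hν1 (by finiteness), mul_one]
  have hsubset : {x | s ≤ ∑' i, F i x ^ (1 / p)} ⊆ ⋃ i, {x | θ i ^ p ≤ F i x} := by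
    intro x hx
    obtain ⟨i, hi⟩ := exists_le_of_tsum_le_tsum (hθsum ▸ hs) (hθsum.trans_le hx)
    rw [one_div, ENNReal.le_rpow_inv_iff hp] at hi
    exact mem_iUnion.2 ⟨i, hi⟩
  have hterm (i : ℕ) : M * (ν ^ i) ^ (2 * p) / θ i ^ p =
      ((1 - ν) ^ p)⁻¹ * (M / s ^ p) * (ν ^ p) ^ i := by
    have hpow : (ν ^ p) ^ i = (ν ^ i) ^ p := by
      rw [← ENNReal.rpow_natCast, ← ENNReal.rpow_natCast, ← ENNReal.rpow_mul, ← ENNReal.rpow_mul,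
        mul_comm]
    rw [hpow, mul_rpow_two_mul_div_rpow hp.le (pow_ne_zero i hν0) (by finiteness) hs0 hs]
  calc μ {x | s ≤ ∑' i, F i x ^ (1 / p)} ≤ ∑' i, μ {x | θ i ^ p ≤ F i x} :=
        (measure_mono hsubset).trans (measure_iUnion_le _)
    _ ≤ ∑' i, M * (ν ^ i) ^ (2 * p) / θ i ^ p := by
        refine ENNReal.tsum_le_tsum fun i => ?_
        refine (meas_ge_le_lintegral_div (hF i) ?_ ?_).trans (ENNReal.div_le_div_right (hFM i) _)
        · simp [hθ0, hθtop]
        · simp [hθ0, hθtop]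
    _ = ((1 - ν) ^ p * (1 - ν ^ p))⁻¹ * (M / s ^ p) := by
        simp_rw [hterm]
        rw [ENNReal.tsum_mul_left, ENNReal.tsum_geometric, ENNReal.mul_inv]
        · ring
        · left; simp [hν1, hp]
        · left; simp [hp.le]

variable {X : Type*} [PseudoMetricSpace X] [MeasurableSpace X] {μ : Measure X}

lemma measurable_setLIntegral_closedBall [OpensMeasurableSpace X] [SecondCountableTopology X]
    [SFinite μ] {g : X → ℝ≥0∞} (hg : Measurable g) (r : ℝ) :
    Measurable fun x => ∫⁻ y in closedBall x r, g y ∂μ := by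
  have hset : MeasurableSet {q : X × X | q.2 ∈ closedBall q.1 r} :=
    measurableSet_le (measurable_snd.dist measurable_fst) measurable_const
  simp_rw [← lintegral_indicator measurableSet_closedBall]
  exact ((hg.comp measurable_snd).indicator hset).lintegral_prod_right'

lemma lintegral_setLIntegral_closedBall [OpensMeasurableSpace X] [SecondCountableTopology X]
    [SFinite μ] {g : X → ℝ≥0∞} (hg : Measurable g) (r : ℝ) :
    ∫⁻ x, ∫⁻ y in closedBall x r, g y ∂μ ∂μ = ∫⁻ y, μ (closedBall y r) * g y ∂μ := by
  have hset : MeasurableSet {q : X × X | q.2 ∈ closedBall q.1 r} :=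
    measurableSet_le (measurable_snd.dist measurable_fst) measurable_const
  simp_rw [← lintegral_indicator measurableSet_closedBall]
  rw [lintegral_lintegral_swap (f := fun x y => (closedBall x r).indicator g y)
    ((hg.comp measurable_snd).indicator hset).aemeasurable]
  congr with y
  rw [mul_comm, ← setLIntegral_const, ← lintegral_indicator measurableSet_closedBall]
  congr with x
  simp only [indicator, mem_closedBall, dist_comm]

/-- The Wolff-type potential `∑ᵢ (rᵢ ^ (-β) * ∫_{B(x, rᵢ)} g) ^ (1 / p)` over the geometric
sequence of radii `rᵢ = R * l ^ i`. -/
noncomputable def wolffPotential (μ : Measure X) (β p l R : ℝ) (g : X → ℝ≥0∞) (x : X) : ℝ≥0∞ :=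
  ∑' i : ℕ, (ENNReal.ofReal (R * l ^ i) ^ (-β) *
    ∫⁻ y in closedBall x (R * l ^ i), g y ∂μ) ^ (1 / p)

variable {β p l R : ℝ} {g : X → ℝ≥0∞}

lemma wolffPotential_eq_zero (hp : 0 < p) (hg : ∫⁻ x, g x ∂μ = 0) (x : X) :
    wolffPotential μ β p l R g x = 0 := by
  have hball (r : ℝ) : ∫⁻ y in closedBall x r, g y ∂μ = 0 :=
    le_antisymm ((setLIntegral_le_lintegral _ _).trans_eq hg) zero_le
  simp [wolffPotential, hball, hp]

lemma wolffPotential_eq_sum_add (j : ℕ) (x : X) :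
    wolffPotential μ β p l R g x =
      ∑ i ∈ Finset.range j, (ENNReal.ofReal (R * l ^ i) ^ (-β) *
        ∫⁻ y in closedBall x (R * l ^ i), g y ∂μ) ^ (1 / p) +
      wolffPotential μ β p l (R * l ^ j) g x := by
  simp only [wolffPotential, mul_assoc R, ← pow_add, add_comm j]
  exact (ENNReal.summable.sum_add_tsum_nat_add').symm

lemma ofReal_rpow_neg_le {r a ρ β : ℝ} (hr : 0 < r) (ha : 0 < a) (hρ : 0 < ρ) (hβ : 0 ≤ β)
    (h : ρ ≤ r * a) :
    ENNReal.ofReal r ^ (-β) ≤ ENNReal.ofReal a ^ β * ENNReal.ofReal ρ ^ (-β) := by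
  rw [ENNReal.ofReal_rpow_of_pos hr, ENNReal.ofReal_rpow_of_pos ha, ENNReal.ofReal_rpow_of_pos hρ,
    ← ENNReal.ofReal_mul (by positivity)]
  apply ENNReal.ofReal_le_ofReal
  rw [Real.rpow_neg hr.le, Real.rpow_neg hρ.le, ← div_eq_mul_inv, inv_eq_one_div,
    div_le_div_iff₀ (by positivity) (by positivity), one_mul, ← Real.mul_rpow ha.le hr.le,
    mul_comm a]
  gcongr

lemma sum_wolffPotential_term_le (hβ : 0 ≤ β) (hp : 0 < p) (hl : 0 < l) (hR : 0 < R) {ρ : ℝ}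
    (hρ : 0 < ρ) {j : ℕ} (hj : ∀ i < j, ρ ≤ R * l ^ i) (x : X) :
    ∑ i ∈ Finset.range j, (ENNReal.ofReal (R * l ^ i) ^ (-β) *
        ∫⁻ y in closedBall x (R * l ^ i), g y ∂μ) ^ (1 / p) ≤
      (1 - ENNReal.ofReal l ^ (β / p))⁻¹ *
        (ENNReal.ofReal ρ ^ (-β) * ∫⁻ y, g y ∂μ) ^ (1 / p) := by
  set q := ENNReal.ofReal l ^ (β / p) with hq
  set N := ∫⁻ y, g y ∂μ
  have hterm : ∀ i ∈ Finset.range j, (ENNReal.ofReal (R * l ^ (j - 1 - i)) ^ (-β) *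
      ∫⁻ y in closedBall x (R * l ^ (j - 1 - i)), g y ∂μ) ^ (1 / p) ≤
        q ^ i * (ENNReal.ofReal ρ ^ (-β) * N) ^ (1 / p) := by
    intro i hi
    have hij : i < j := Finset.mem_range.1 hi
    have hradius : ρ ≤ R * l ^ (j - 1 - i) * l ^ i := by
      rw [mul_assoc, ← pow_add, Nat.sub_add_cancel (by lia)]
      exact hj (j - 1) (by lia)
    have hqi : q ^ i = ((ENNReal.ofReal (l ^ i)) ^ β) ^ (1 / p) := by
      rw [hq, ENNReal.ofReal_pow hl.le, ← ENNReal.rpow_natCast, ← ENNReal.rpow_natCast,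
        ← ENNReal.rpow_mul, ← ENNReal.rpow_mul, ← ENNReal.rpow_mul]
      ring_nf
    rw [hqi, ← ENNReal.mul_rpow_of_nonneg _ _ (by positivity), ← mul_assoc]
    gcongr
    · exact ofReal_rpow_neg_le (by positivity) (by positivity) hρ hβ hradius
    · exact setLIntegral_le_lintegral _ _
  calc _ ≤ ∑ i ∈ Finset.range j, q ^ i * (ENNReal.ofReal ρ ^ (-β) * N) ^ (1 / p) := by
        rw [← Finset.sum_range_reflect]
        exact Finset.sum_le_sum hterm
    _ ≤ (∑' i, q ^ i) * (ENNReal.ofReal ρ ^ (-β) * N) ^ (1 / p) := by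
        rw [← Finset.sum_mul]
        gcongr
        exact ENNReal.sum_le_tsum _
    _ = _ := by rw [ENNReal.tsum_geometric]

lemma exists_wolffPotential_le (hβ : 0 ≤ β) (hp : 0 < p) (hl0 : 0 < l) (hl : l < 1) (hR : 0 < R)
    {ρ : ℝ} (hρ : 0 < ρ) :
    ∃ R' ∈ Ioc 0 ρ, ∀ x, wolffPotential μ β p l R g x ≤
      (1 - ENNReal.ofReal l ^ (β / p))⁻¹ * (ENNReal.ofReal ρ ^ (-β) * ∫⁻ y, g y ∂μ) ^ (1 / p) +
        wolffPotential μ β p l R' g x := by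
  classical
  have hex : ∃ j, R * l ^ j ≤ ρ := by
    obtain ⟨j, hj⟩ := exists_pow_lt_of_lt_one (div_pos hρ hR) hl
    exact ⟨j, ((lt_div_iff₀' hR).1 hj).le⟩
  obtain ⟨j, hjρ, hjmin⟩ : ∃ j, R * l ^ j ≤ ρ ∧ ∀ i < j, ρ ≤ R * l ^ i :=
    ⟨Nat.find hex, Nat.find_spec hex, fun i hi => (not_le.1 (Nat.find_min hex hi)).le⟩
  refine ⟨R * l ^ j, ⟨by positivity, hjρ⟩, fun x => ?_⟩
  rw [wolffPotential_eq_sum_add j]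
  gcongr
  exact sum_wolffPotential_term_le hβ hp hl0 hR hρ hjmin x

variable [OpensMeasurableSpace X] [SecondCountableTopology X] [SFinite μ] {A : ℝ≥0} {d : ℝ}

lemma lintegral_wolffPotential_term_le (hl : 0 < l) (hR : 0 < R)
    (hμ : ∀ x r, 0 < r → μ (closedBall x r) ≤ A * ENNReal.ofReal r ^ d) (hg : Measurable g)
    (i : ℕ) :
    ∫⁻ x, ENNReal.ofReal (R * l ^ i) ^ (-β) * ∫⁻ y in closedBall x (R * l ^ i), g y ∂μ ∂μ ≤
      A * (∫⁻ y, g y ∂μ) * ENNReal.ofReal R ^ (d - β) * (ENNReal.ofReal l ^ i) ^ (d - β) := by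
  set r := R * l ^ i with hr_def
  have hr : 0 < r := by positivity
  have hr0 : ENNReal.ofReal r ≠ 0 := by simp [hr]
  calc ∫⁻ x, ENNReal.ofReal r ^ (-β) * ∫⁻ y in closedBall x r, g y ∂μ ∂μ
      = ENNReal.ofReal r ^ (-β) * ∫⁻ y, μ (closedBall y r) * g y ∂μ := by
        rw [lintegral_const_mul _ (measurable_setLIntegral_closedBall hg r),
          lintegral_setLIntegral_closedBall hg]
    _ ≤ ENNReal.ofReal r ^ (-β) * ∫⁻ y, A * ENNReal.ofReal r ^ d * g y ∂μ := by
        gcongr with y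
        exact hμ y r hr
    _ = A * (∫⁻ y, g y ∂μ) * (ENNReal.ofReal r ^ d * ENNReal.ofReal r ^ (-β)) := by
        rw [lintegral_const_mul _ hg]
        ring
    _ = _ := by
        rw [← ENNReal.rpow_add _ _ hr0 ENNReal.ofReal_ne_top, ← sub_eq_add_neg, mul_assoc, hr_def,
          ENNReal.ofReal_mul hR.le, ENNReal.ofReal_pow hl.le,
          ENNReal.mul_rpow_of_ne_top ENNReal.ofReal_ne_top (by finiteness)]
        ring

lemma exists_meas_ge_wolffPotential_le (hp : 0 < p) (hl0 : 0 < l) (hl : l < 1) (hβ : β < d)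
    (hμ : ∀ x r, 0 < r → μ (closedBall x r) ≤ A * ENNReal.ofReal r ^ d) :
    ∃ K : ℝ≥0∞, K ≠ ⊤ ∧ ∀ (R : ℝ) (g : X → ℝ≥0∞) (s : ℝ≥0∞), 0 < R → Measurable g → s ≠ 0 → s ≠ ⊤ →
      μ {x | s ≤ wolffPotential μ β p l R g x} ≤
        K * (A * (∫⁻ y, g y ∂μ) * ENNReal.ofReal R ^ (d - β) / s ^ p) := by
  set ν := ENNReal.ofReal l ^ ((d - β) / (2 * p)) with hν_def
  have hσ : 0 < (d - β) / (2 * p) := div_pos (sub_pos.2 hβ) (by positivity)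
  have hν0 : ν ≠ 0 := by simp [hν_def, hl0.not_ge]
  have hν : ν < 1 := ENNReal.rpow_lt_one (by simpa using hl) hσ
  refine ⟨((1 - ν) ^ p * (1 - ν ^ p))⁻¹, ?_, fun R g s hR hg hs0 hs => ?_⟩
  · have hνp : ν ^ p < 1 := ENNReal.rpow_lt_one hν hp
    simp [tsub_eq_zero_iff_le, hν, hνp, hp]
  refine meas_ge_tsum_rpow_le
    (fun i => ((measurable_setLIntegral_closedBall hg _).const_mul _).aemeasurable)
    hp hν0 hν hs0 hs fun i => (lintegral_wolffPotential_term_le hl0 hR hμ hg i).trans_eq ?_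
  congr 1
  rw [hν_def, ← ENNReal.rpow_natCast, ← ENNReal.rpow_natCast, ← ENNReal.rpow_mul,
    ← ENNReal.rpow_mul, ← ENNReal.rpow_mul]
  congr 1
  field_simp

lemma exists_radius_nearPart_eq (hp : 0 < p) (hβ : 0 < β) {c N s : ℝ≥0∞} (hc0 : c ≠ 0)
    (hc : c ≠ ⊤) (hN0 : N ≠ 0) (hN : N ≠ ⊤) (hs0 : s ≠ 0) (hs : s ≠ ⊤) :
    ∃ ρ : ℝ, 0 < ρ ∧ ENNReal.ofReal ρ = (c ^ p * (N / s ^ p)) ^ (1 / β) ∧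
      c * (ENNReal.ofReal ρ ^ (-β) * N) ^ (1 / p) = s := by
  have hsp0 : s ^ p ≠ 0 := by simp [hs0, hs]
  have hsp : s ^ p ≠ ⊤ := by finiteness
  have hcp0 : c ^ p ≠ 0 := by simp [hc0, hc]
  have hcp : c ^ p ≠ ⊤ := by finiteness
  have hpos : (c ^ p * (N / s ^ p)) ^ (1 / β) ≠ 0 := by
    simp [hc0, hc, hN0, hs0, hs, hβ.le]
  have hfin : (c ^ p * (N / s ^ p)) ^ (1 / β) ≠ ⊤ := by finiteness
  have hρ := ENNReal.ofReal_toReal hfin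
  refine ⟨_, ENNReal.toReal_pos hpos hfin, hρ, ?_⟩
  have hcore : (c ^ p * (N / s ^ p))⁻¹ * N = (c⁻¹ * s) ^ p := by
    rw [ENNReal.mul_inv (.inl hcp0) (.inl hcp), ENNReal.inv_div (.inl hsp) (.inl hsp0), mul_assoc,
      ENNReal.div_mul_cancel hN0 hN, ENNReal.mul_rpow_of_nonneg _ _ hp.le, ENNReal.inv_rpow]
  rw [hρ, ← ENNReal.rpow_mul, one_div_mul_eq_div, neg_div_self hβ.ne', ENNReal.rpow_neg_one, hcore,
    one_div, ENNReal.rpow_rpow_inv hp.ne', ← mul_assoc, ENNReal.mul_inv_cancel hc0 hc, one_mul]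

lemma div_div_two_rpow (hp : 0 ≤ p) (N s : ℝ≥0∞) : N / (s / 2) ^ p = 2 ^ p * (N / s ^ p) := by
  rw [ENNReal.div_rpow_of_nonneg _ _ hp, ENNReal.div_eq_inv_mul,
    ENNReal.inv_div (by simp) (by simp [hp]), div_eq_mul_inv, div_eq_mul_inv, mul_assoc, mul_comm N]

lemma mul_rpow_div_half_rpow (hp : 0 ≤ p) (hβ0 : 0 < β) (hβ : β < d) (A c N s : ℝ≥0∞) :
    A * N * ((c * (N / (s / 2) ^ p)) ^ (1 / β)) ^ (d - β) / (s / 2) ^ p =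
      A * c ^ ((d - β) / β) * (2 ^ p) ^ (d / β) * (N / s ^ p) ^ (d / β) := by
  have hσ : 0 ≤ (d - β) / β := div_nonneg (sub_pos.2 hβ).le hβ0.le
  have hdβ : 1 + (d - β) / β = d / β := by field_simp; ring
  set t := N / (s / 2) ^ p with ht
  calc A * N * ((c * t) ^ (1 / β)) ^ (d - β) / (s / 2) ^ p
      = A * c ^ ((d - β) / β) * (t * t ^ ((d - β) / β)) := by
        rw [← ENNReal.rpow_mul, one_div_mul_eq_div, ENNReal.mul_rpow_of_nonneg _ _ hσ,
          mul_right_comm, mul_div_assoc, ← ht]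
        ring
    _ = _ := by
        nth_rw 1 [← ENNReal.rpow_one t]
        rw [← ENNReal.rpow_add_of_nonneg _ _ one_pos.le hσ, hdβ, ht, div_div_two_rpow hp,
          ENNReal.mul_rpow_of_nonneg _ _ (hdβ ▸ add_nonneg one_pos.le hσ)]
        ring

theorem exists_weak_type_wolffPotential (hp : 0 < p) (hl0 : 0 < l) (hl : l < 1) (hβ0 : 0 < β)
    (hβ : β < d) (hμ : ∀ x r, 0 < r → μ (closedBall x r) ≤ A * ENNReal.ofReal r ^ d) :
    ∃ K : ℝ≥0∞, K ≠ ⊤ ∧ ∀ (R : ℝ) (g : X → ℝ≥0∞) (s : ℝ≥0∞), 0 < R → Measurable g →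
      ∫⁻ y, g y ∂μ ≠ ⊤ → s ≠ 0 → s ≠ ⊤ →
        μ {x | s ≤ wolffPotential μ β p l R g x} ≤ K * ((∫⁻ y, g y ∂μ) / s ^ p) ^ (d / β) := by
  obtain ⟨K₀, hK₀, hcrude⟩ := exists_meas_ge_wolffPotential_le hp hl0 hl hβ hμ
  set c := (1 - ENNReal.ofReal l ^ (β / p))⁻¹ with hc_def
  have hq : ENNReal.ofReal l ^ (β / p) < 1 :=
    ENNReal.rpow_lt_one (by simpa using hl) (by positivity)
  have hc0 : c ≠ 0 := by simp [hc_def]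
  have hc : c ≠ ⊤ := by finiteness [(tsub_pos_of_lt hq).ne']
  have hσ : 0 ≤ (d - β) / β := div_nonneg (sub_pos.2 hβ).le hβ0.le
  have hdβ0 : 0 ≤ d / β := div_nonneg (hβ0.trans hβ).le hβ0.le
  refine ⟨K₀ * A * (c ^ p) ^ ((d - β) / β) * (2 ^ p) ^ (d / β), by finiteness [hσ, hdβ0], ?_⟩
  intro R g s hR hg hN hs0 hs
  set N := ∫⁻ y, g y ∂μ
  rcases eq_or_ne N 0 with hN0 | hN0
  · simp [wolffPotential_eq_zero hp hN0, hs0]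
  have hs0' : s / 2 ≠ 0 := by simpa using hs0
  have hs' : s / 2 ≠ ⊤ := by finiteness
  -- At this `ρ` the bound for the radii above `ρ` is exactly `s / 2`, leaving `s / 2` for the rest.
  obtain ⟨ρ, hρ, hρt, hnear⟩ := exists_radius_nearPart_eq hp hβ0 hc0 hc hN0 hN hs0' hs'
  obtain ⟨R', hR', hW⟩ := exists_wolffPotential_le (μ := μ) (g := g) hβ0.le hp hl0 hl hR hρ
  have hsubset : {x | s ≤ wolffPotential μ β p l R g x} ⊆
      {x | s / 2 ≤ wolffPotential μ β p l R' g x} := by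
    intro x hx
    have h : s / 2 + s / 2 ≤ s / 2 + wolffPotential μ β p l R' g x := by
      rw [ENNReal.add_halves, ← hnear]
      exact hx.trans (hW x)
    exact (ENNReal.add_le_add_iff_left hs').1 h
  calc μ {x | s ≤ wolffPotential μ β p l R g x}
      ≤ K₀ * (A * N * ENNReal.ofReal ρ ^ (d - β) / (s / 2) ^ p) := by
        refine (measure_mono hsubset).trans ((hcrude R' g (s / 2) hR'.1 hg hs0' hs').trans ?_)
        gcongr
        exact hR'.2
    _ = _ := by
        rw [hρt, mul_rpow_div_half_rpow hp.le hβ0 hβ]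
        ring

end WolffPotential

section ChainOfBalls

variable {n : ℕ} {C L κ δ τ p t : ℝ} {x₀ : Eucl n} {D : Set (Eucl n)} {u : Eucl n → ℝ}

/-- The multiple of `energyDensity` whose Wolff potential bounds the oscillation of `u` along a
chain of balls `B(γ t, κ t)`. The factor `(κ / 2) ^ (δ * p - n)` passes from the radius `κ * t` of a
chain ball to the radius `2 * t` of a ball that contains it and is centered at the end point. -/
noncomputable def chainDensity (n : ℕ) (κ δ τ p : ℝ) (D : Set (Eucl n)) (u : Eucl n → ℝ)
    (y : Eucl n) : ℝ≥0∞ :=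
  poincareConst n (δ * p) * ENNReal.ofReal (κ / 2) ^ (-((n : ℝ) - δ * p)) *
    energyDensity n δ τ p D u y

lemma measurable_chainDensity (hD : MeasurableSet D) (hu : Measurable u) :
    Measurable (chainDensity n κ δ τ p D u) :=
  (measurable_energyDensity hD hu).const_mul _

lemma lintegral_chainDensity (hκ : 0 < κ) (hD : MeasurableSet D) :
    ∫⁻ y, chainDensity n κ δ τ p D u y =
      poincareConst n (δ * p) * ENNReal.ofReal (κ / 2) ^ (-((n : ℝ) - δ * p)) *
        fracEnergyTau n δ τ p D u := by
  have hκ' : ENNReal.ofReal (κ / 2) ≠ 0 := by simp [hκ]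
  rw [← lintegral_energyDensity hD, ← lintegral_const_mul' _ _ (by finiteness [hκ'])]
  rfl

lemma laverage_enorm_sub_average_rpow_le_chainDensity (hτ : τ ∈ Ioo (0 : ℝ) 1) (hδ : 0 ≤ δ)
    (hp : 1 ≤ p) (hD : IsOpen D) (hfr : (frontier D).Nonempty) (hu : LocallyIntegrable u)
    (hκ : 0 < κ) (ht : 0 < t) {x x' : Eucl n} (hx : x ∈ D)
    (hxt : 8 * (κ * t) ≤ τ * infDist x (frontier D)) {r' : ℝ} (hr' : κ * t / 2 ≤ r')
    (hxx' : dist x x' + r' ≤ 2 * (κ * t)) :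
    ⨍⁻ y in closedBall x (κ * t), ‖u y - ⨍ z in closedBall x' r', u z‖ₑ ^ p ∂volume ≤
      ENNReal.ofReal (2 * t) ^ (-((n : ℝ) - δ * p)) *
        ∫⁻ y in closedBall x (κ * t), chainDensity n κ δ τ p D u y := by
  have hκ' : ENNReal.ofReal (κ / 2) ≠ 0 := by simp [hκ]
  have hradius : ENNReal.ofReal (κ * t) = ENNReal.ofReal (2 * t) * ENNReal.ofReal (κ / 2) := by
    rw [← ENNReal.ofReal_mul (by positivity)]
    ring_nf
  refine (laverage_enorm_sub_average_rpow_le hτ hδ hp hD hfr hu hx (by positivity) hxt hr'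
    hxx').trans_eq ?_
  simp only [chainDensity]
  rw [lintegral_const_mul' _ _ (by finiteness [hκ']), hradius,
    ENNReal.mul_rpow_of_ne_top ENNReal.ofReal_ne_top ENNReal.ofReal_ne_top]
  ring

lemma dist_le_of_lipschitzOnWith_one {X : Type*} [PseudoMetricSpace X] {γ : ℝ → X}
    (hγ : LipschitzOnWith 1 γ (Icc 0 L)) {s : ℝ} (hs : 0 ≤ s) (hst : s ≤ t) (htL : t ≤ L) :
    dist (γ t) (γ s) ≤ t - s := by
  simpa [Real.dist_eq, abs_of_nonneg (sub_nonneg.2 hst)] using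
    hγ.dist_le_mul t ⟨hs.trans hst, htL⟩ s ⟨hs, hst.trans htL⟩

lemma closedBall_subset_closedBall_of_lipschitzOnWith_one {X : Type*} [PseudoMetricSpace X]
    {γ : ℝ → X} (hγ : LipschitzOnWith 1 γ (Icc 0 L)) (hκ : κ ≤ 1) (ht : 0 ≤ t) (htL : t ≤ L) :
    closedBall (γ t) (κ * t) ⊆ closedBall (γ 0) (2 * t) :=
  closedBall_subset_closedBall' <| by
    nlinarith [dist_le_of_lipschitzOnWith_one hγ le_rfl ht htL]

lemma eight_mul_le_mul_infDist {X : Type*} [PseudoMetricSpace X] {S : Set X} {x : X}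
    (hC : 0 < C) (hκ : 0 ≤ κ) (hκτ : 8 * C * κ ≤ τ) (hx : t / C ≤ infDist x S) :
    8 * (κ * t) ≤ τ * infDist x S := by
  rw [div_le_iff₀ hC] at hx
  nlinarith [mul_le_mul_of_nonneg_right hκτ (infDist_nonneg (x := x) (s := S)),
    mul_le_mul_of_nonneg_left hx hκ]

lemma enorm_average_sub_average_le_chainDensity (hτ : τ ∈ Ioo (0 : ℝ) 1) (hδ : 0 ≤ δ)
    (hp : 1 ≤ p) (hD : IsOpen D) (hfr : (frontier D).Nonempty) (hu : LocallyIntegrable u)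
    (hκ0 : 0 < κ) (hκ : κ ≤ 1 / 2) {γ : ℝ → Eucl n} (hγ : LipschitzOnWith 1 γ (Icc 0 L))
    (ht : 0 < t) (htL : t ≤ L) (hγD : γ t ∈ D)
    (hγt : 8 * (κ * t) ≤ τ * infDist (γ t) (frontier D)) {s : ℝ} (hs : s = (1 - κ) * t) :
    ‖(⨍ y in closedBall (γ t) (κ * t), u y) - ⨍ y in closedBall (γ s) (κ * s), u y‖ₑ ≤
      (ENNReal.ofReal (2 * t) ^ (-((n : ℝ) - δ * p)) *
        ∫⁻ y in closedBall (γ 0) (2 * t), chainDensity n κ δ τ p D u y) ^ (1 / p) := by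
  have hr : 0 < κ * t := by positivity
  have : IsFiniteMeasure (volume.restrict (closedBall (γ t) (κ * t))) :=
    isFiniteMeasure_restrict.2 measure_closedBall_lt_top.ne
  have : NeZero (volume.restrict (closedBall (γ t) (κ * t))) :=
    ⟨by simpa using (measure_closedBall_pos volume (γ t) hr).ne'⟩
  have hdist := dist_le_of_lipschitzOnWith_one hγ (s := s) (by nlinarith) (by nlinarith) htL
  rw [one_div, ENNReal.le_rpow_inv_iff (one_pos.trans_le hp)]
  refine (enorm_average_sub_rpow_le
    (hu.integrableOn_isCompact (isCompact_closedBall _ _)) _ hp).trans ?_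
  refine (laverage_enorm_sub_average_rpow_le_chainDensity hτ hδ hp hD hfr hu hκ0 ht hγD hγt
    (by nlinarith) (by nlinarith)).trans ?_
  gcongr
  exact closedBall_subset_closedBall_of_lipschitzOnWith_one hγ (by linarith) ht.le htL

theorem IsCenteredJohn.ae_enorm_sub_average_le_wolffPotential (h : IsCenteredJohn C L x₀ D)
    (hC : 0 < C) (hτ : τ ∈ Ioo (0 : ℝ) 1) (hδ : 0 ≤ δ) (hp : 1 ≤ p) (hκ0 : 0 < κ)
    (hκ : κ ≤ 1 / 2) (hκτ : 8 * C * κ ≤ τ) (hu : LocallyIntegrable u) :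
    ∀ᵐ x ∂volume.restrict D, ‖u x - ⨍ y in closedBall x₀ (κ * L), u y‖ₑ ≤
      wolffPotential volume ((n : ℝ) - δ * p) p (1 - κ) (2 * L) (chainDensity n κ δ τ p D u) x := by
  rw [ae_restrict_iff' h.isOpen.measurableSet]
  filter_upwards [IsUnifLocDoublingMeasure.ae_tendsto_average volume hu (1 / κ)] with x hx hxD
  obtain ⟨γ, rfl, rfl, hγ, hJohn⟩ := h.exists_curve x hxD
  set t : ℕ → ℝ := fun i => L * (1 - κ) ^ i with ht_def
  have hL := h.length_pos
  have htpos (i : ℕ) : 0 < t i := mul_pos hL (pow_pos (by linarith) i)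
  have htL (i : ℕ) : t i ≤ L :=
    mul_le_of_le_one_right hL.le (pow_le_one₀ (by linarith) (by linarith))
  have htlim : Filter.Tendsto (fun i => κ * t i) Filter.atTop (nhdsWithin 0 (Ioi 0)) := by
    refine tendsto_nhdsWithin_iff.2 ⟨?_, .of_forall fun i => mul_pos hκ0 (htpos i)⟩
    simpa using ((tendsto_pow_atTop_nhds_zero_of_lt_one (r := 1 - κ) (by linarith)
      (by linarith)).const_mul L).const_mul κ
  have hlim : Filter.Tendsto (fun i => ⨍ y in closedBall (γ (t i)) (κ * t i), u y) Filter.atTop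
      (nhds (u (γ 0))) := by
    refine hx _ _ htlim (.of_forall fun i => ?_)
    rw [one_div, inv_mul_cancel_left₀ hκ0.ne', mem_closedBall']
    simpa using dist_le_of_lipschitzOnWith_one hγ le_rfl (htpos i).le (htL i)
  have hstep (i : ℕ) := enorm_average_sub_average_le_chainDensity hτ hδ hp h.isOpen
    h.frontier_nonempty hu hκ0 hκ hγ (htpos i) (htL i) (hJohn _ ⟨(htpos i).le, htL i⟩).1
    (eight_mul_le_mul_infDist hC hκ0.le hκτ (hJohn _ ⟨(htpos i).le, htL i⟩).2)
    (s := t (i + 1)) (by simp only [ht_def]; ring)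
  have hsum := edist_le_tsum_of_edist_le_of_tendsto₀ _
    (fun i => (edist_eq_enorm_sub _ _).trans_le (hstep i)) hlim
  simpa [ht_def, wolffPotential, mul_assoc, edist_comm, ← edist_eq_enorm_sub] using hsum

end ChainOfBalls

section Truncation

variable {p r : ℝ}

lemma tsum_rpow_le_rpow_tsum {ι : Type*} (a : ι → ℝ≥0∞) (hp : 1 ≤ p) :
    ∑' i, a i ^ p ≤ (∑' i, a i) ^ p := by
  have hsplit (x : ℝ≥0∞) : x ^ p = x * x ^ (p - 1) := by
    nth_rw 2 [← ENNReal.rpow_one x]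
    rw [← ENNReal.rpow_add_of_nonneg _ _ one_pos.le (sub_nonneg.2 hp), add_sub_cancel]
  calc ∑' i, a i ^ p = ∑' i, a i * a i ^ (p - 1) := by simp_rw [hsplit]
    _ ≤ ∑' i, a i * (∑' j, a j) ^ (p - 1) := by
        gcongr with i
        exact ENNReal.le_tsum i
    _ = (∑' i, a i) ^ p := by rw [ENNReal.tsum_mul_right, hsplit]

lemma fracKernel_eq_enorm_rpow_div {n : ℕ} {δ : ℝ} (hp : 0 < p) (u : Eucl n → ℝ) (y z : Eucl n) :
    fracKernel n δ p u y z =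
      ‖u y - u z‖ₑ ^ p / ENNReal.ofReal (dist y z ^ ((n : ℝ) + δ * p)) := by
  rcases eq_or_ne y z with rfl | hne
  · simp [fracKernel, hp, Real.zero_rpow hp.ne']
  · have hyz : 0 < dist y z := dist_pos.2 hne
    rw [fracKernel, ENNReal.ofReal_div_of_pos (by positivity), Real.enorm_eq_ofReal_abs,
      ENNReal.ofReal_rpow_of_nonneg (abs_nonneg _) hp.le]

lemma tsum_fracEnergyTau_le {n : ℕ} {δ τ : ℝ} {D : Set (Eucl n)} {ι : Type*} [Countable ι]
    {f : ι → Eucl n → ℝ} {u : Eucl n → ℝ} (hp : 1 ≤ p) (hD : MeasurableSet D)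
    (hf : ∀ i, Measurable (f i)) (hfu : ∀ y z, ∑' i, ‖f i y - f i z‖ₑ ≤ ‖u y - u z‖ₑ) :
    ∑' i, fracEnergyTau n δ τ p D (f i) ≤ fracEnergyTau n δ τ p D u := by
  have hp0 : 0 < p := one_pos.trans_le hp
  have hkernel (y z : Eucl n) : ∑' i, fracKernel n δ p (f i) y z ≤ fracKernel n δ p u y z := by
    simp_rw [fracKernel_eq_enorm_rpow_div hp0, div_eq_mul_inv]
    rw [ENNReal.tsum_mul_right]
    gcongr
    exact (tsum_rpow_le_rpow_tsum _ hp).trans (by gcongr; exact hfu y z)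
  simp_rw [← lintegral_energyDensity hD]
  rw [← lintegral_tsum fun i => (measurable_energyDensity hD (hf i)).aemeasurable]
  refine lintegral_mono fun y => ?_
  by_cases hy : y ∈ D
  · simp only [energyDensity, indicator_of_mem hy]
    have hmeas (i : ι) : Measurable fun z => fracKernel n δ p (f i) y z :=
      Measurable.of_uncurry_left (f := fracKernel n δ p (f i)) (measurable_fracKernel (hf i))
    rw [← lintegral_tsum fun i => (hmeas i).aemeasurable]
    exact lintegral_mono fun z => hkernel y z
  · simp [energyDensity, hy]

/-- The part of `a` between the levels `s ≤ t`: it vanishes for `a ≤ s` and equals `t - s` for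
`t ≤ a`. Written as a difference so that sums over consecutive levels telescope. -/
noncomputable def slice (s t a : ℝ) : ℝ := min a t - min a s

lemma slice_eq_sub {s t a : ℝ} (hst : s ≤ t) (hta : t ≤ a) : slice s t a = t - s := by
  rw [slice, min_eq_right hta, min_eq_right (hst.trans hta)]

lemma slice_nonneg {s t : ℝ} (hst : s ≤ t) (a : ℝ) : 0 ≤ slice s t a :=
  sub_nonneg.2 (min_le_min_left a hst)

lemma slice_le_self {s t a : ℝ} (hs : 0 ≤ s) (ha : 0 ≤ a) : slice s t a ≤ a :=
  (sub_le_self _ (le_min ha hs)).trans (min_le_left a t)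

lemma monotone_slice {s t : ℝ} (hst : s ≤ t) : Monotone (slice s t) := by
  intro a b hab
  simp only [slice, min_def]
  split_ifs <;> linarith

lemma slice_sub_slice_le_sub {s t a b : ℝ} (hst : s ≤ t) (hab : a ≤ b) :
    slice s t b - slice s t a ≤ b - a := by
  simp only [slice, min_def]
  split_ifs <;> linarith

lemma measurable_slice (s t : ℝ) : Measurable (slice s t) := by
  unfold slice
  fun_prop

lemma tsum_enorm_slice_sub_slice_le {l : ℕ → ℝ} (hl : Monotone l) (a b : ℝ) :
    ∑' k, ‖slice (l k) (l (k + 1)) a - slice (l k) (l (k + 1)) b‖ₑ ≤ ‖a - b‖ₑ := by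
  wlog hab : b ≤ a generalizing a b
  · simp only [enorm_sub_rev a, enorm_sub_rev (slice _ _ a)]
    exact this b a (le_of_not_ge hab)
  refine ENNReal.tsum_le_of_sum_range_le fun N => ?_
  have hnonneg (k : ℕ) : 0 ≤ slice (l k) (l (k + 1)) a - slice (l k) (l (k + 1)) b :=
    sub_nonneg.2 (monotone_slice (hl k.le_succ) hab)
  have htelescope (x : ℝ) :
      ∑ k ∈ Finset.range N, slice (l k) (l (k + 1)) x = slice (l 0) (l N) x :=
    Finset.sum_range_sub (fun k => min x (l k)) N
  simp only [Real.enorm_of_nonneg (hnonneg _), Real.enorm_of_nonneg (sub_nonneg.2 hab)]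
  rw [← ENNReal.ofReal_sum_of_nonneg fun k _ => hnonneg k, Finset.sum_sub_distrib, htelescope,
    htelescope]
  exact ENNReal.ofReal_le_ofReal (slice_sub_slice_le_sub (hl N.zero_le) hab)

lemma coe_rpow_le_add_tsum_indicator {M : ℝ≥0} (hM : 0 < M) {q : ℝ} (hq : 0 ≤ q) (v : ℝ≥0) :
    (v : ℝ≥0∞) ^ q ≤ (2 * M) ^ q +
      ∑' k, (Ici (M * 2 ^ (k + 1))).indicator (fun _ => (4 * (M * 2 ^ k) : ℝ≥0∞) ^ q) v := by
  rcases lt_or_ge v (2 * M) with hv | hv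
  · refine le_add_right ?_
    gcongr
    exact_mod_cast hv.le
  · obtain ⟨k, hk, hk'⟩ := exists_nat_pow_near (x := v / (2 * M)) (y := 2)
      ((one_le_div (by positivity)).2 hv) one_lt_two
    rw [le_div_iff₀ (by positivity)] at hk
    rw [div_lt_iff₀ (by positivity)] at hk'
    have hmem : v ∈ Ici (M * 2 ^ (k + 1)) := mem_Ici.2 (by convert hk using 1; ring)
    refine le_add_left ((ENNReal.le_tsum k).trans' ?_)
    rw [indicator_of_mem hmem]
    gcongr
    calc (v : ℝ≥0∞) ≤ (2 ^ (k + 1) * (2 * M) : ℝ≥0) := by exact_mod_cast hk'.le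
      _ = 4 * (M * 2 ^ k) := by push_cast; ring

lemma mul_rpow_mul_rpow_div {M E : ℝ≥0∞} (hM0 : M ≠ 0) (hM : M ≠ ⊤) (hp : 0 ≤ p) (hr : 0 ≤ r) :
    (4 * M) ^ (p * r) * (E / M ^ p) ^ r = 4 ^ (p * r) * E ^ r := by
  have hMp : (M ^ p) ^ r ≠ 0 := by simp [hM0, hM]
  rw [ENNReal.mul_rpow_of_nonneg _ _ (by positivity), ENNReal.rpow_mul M,
    ENNReal.div_rpow_of_nonneg _ _ hr, mul_assoc, ENNReal.mul_div_cancel hMp (by finiteness)]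

theorem lintegral_rpow_le_of_dyadic_weak_type {α : Type*} [MeasurableSpace α] {μ : Measure α}
    {v : α → ℝ≥0} (hv : Measurable v) {M : ℝ≥0} (hM : 0 < M) (hp : 0 ≤ p) (hr : 1 ≤ r)
    {A : ℝ≥0∞} {E : ℕ → ℝ≥0∞}
    (hvE : ∀ k, μ {x | M * 2 ^ (k + 1) ≤ v x} ≤ A * (E k / (M * 2 ^ k) ^ p) ^ r) :
    ∫⁻ x, (v x : ℝ≥0∞) ^ (p * r) ∂μ ≤
      (2 * M) ^ (p * r) * μ univ + A * 4 ^ (p * r) * (∑' k, E k) ^ r := by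
  have hr0 : 0 ≤ r := one_pos.le.trans hr
  have hterm (k : ℕ) : (4 * (M * 2 ^ k) : ℝ≥0∞) ^ (p * r) * μ {x | M * 2 ^ (k + 1) ≤ v x} ≤
      A * 4 ^ (p * r) * E k ^ r := by
    have hMk : (M * 2 ^ k : ℝ≥0∞) ≠ 0 := by positivity
    calc _ ≤ (4 * (M * 2 ^ k) : ℝ≥0∞) ^ (p * r) * (A * (E k / (M * 2 ^ k) ^ p) ^ r) := by
          gcongr
          exact hvE k
      _ = A * ((4 * (M * 2 ^ k)) ^ (p * r) * (E k / (M * 2 ^ k) ^ p) ^ r) := by ring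
      _ = _ := by rw [mul_rpow_mul_rpow_div hMk (by finiteness) hp hr0, mul_assoc]
  have hlevel (k : ℕ) : MeasurableSet {x | M * 2 ^ (k + 1) ≤ v x} :=
    measurableSet_le measurable_const hv
  calc ∫⁻ x, (v x : ℝ≥0∞) ^ (p * r) ∂μ
      ≤ ∫⁻ x, (2 * M) ^ (p * r) + ∑' k, {x | M * 2 ^ (k + 1) ≤ v x}.indicator
          (fun _ => (4 * (M * 2 ^ k) : ℝ≥0∞) ^ (p * r)) x ∂μ :=
        lintegral_mono fun x => coe_rpow_le_add_tsum_indicator hM (by positivity) (v x)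
    _ = (2 * M) ^ (p * r) * μ univ + ∑' k, (4 * (M * 2 ^ k) : ℝ≥0∞) ^ (p * r) *
          μ {x | M * 2 ^ (k + 1) ≤ v x} := by
        rw [lintegral_add_left measurable_const, lintegral_const,
          lintegral_tsum fun k => (measurable_const.indicator (hlevel k)).aemeasurable]
        simp_rw [lintegral_indicator_const (hlevel _)]
    _ ≤ (2 * M) ^ (p * r) * μ univ + A * 4 ^ (p * r) * (∑' k, E k) ^ r := by
        gcongr
        refine (ENNReal.tsum_le_tsum hterm).trans ?_
        rw [ENNReal.tsum_mul_left]
        gcongr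
        exact tsum_rpow_le_rpow_tsum E hr

end Truncation

section StrongType

variable {n : ℕ} {C L κ δ τ p : ℝ} {x₀ : Eucl n} {D : Set (Eucl n)} {u : Eucl n → ℝ}

lemma volume_closedBall_le (x : Eucl n) (r : ℝ) (hr : 0 < r) :
    volume (closedBall x r) ≤
      (volume.real (ball (0 : Eucl n) 1)).toNNReal * ENNReal.ofReal r ^ (n : ℝ) := by
  rw [volume_closedBall_eq x hr.le, ENNReal.ofReal_mul measureReal_nonneg,
    ENNReal.ofReal_pow hr.le, ENNReal.rpow_natCast, ENNReal.ofReal]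

/-- The weak-type form, with constant `K`, of the fractional Sobolev–Poincaré inequality on `D`.
Oscillation is measured from the average over a small ball centered at `x₀`, and the energy enters
through the total mass of `chainDensity`. -/
def WeakSobolevPoincare (n : ℕ) (κ δ τ p : ℝ) (K : ℝ≥0∞) (L : ℝ) (x₀ : Eucl n)
    (D : Set (Eucl n)) : Prop :=
  ∀ u : Eucl n → ℝ, Measurable u → LocallyIntegrable u →
    ∫⁻ y, chainDensity n κ δ τ p D u y ≠ ⊤ → ∀ s : ℝ≥0∞, s ≠ 0 → s ≠ ⊤ →
      volume.restrict D {x | s ≤ ‖u x - ⨍ y in closedBall x₀ (κ * L), u y‖ₑ} ≤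
        K * ((∫⁻ y, chainDensity n κ δ τ p D u y) / s ^ p) ^ ((n : ℝ) / (n - δ * p))

lemma IsCenteredJohn.exists_weakSobolevPoincare (hC : 0 < C) (hτ : τ ∈ Ioo (0 : ℝ) 1) (hδ : 0 < δ)
    (hp : 1 ≤ p) (hpn : δ * p < n) (hκ0 : 0 < κ) (hκ : κ ≤ 1 / 2) (hκτ : 8 * C * κ ≤ τ) :
    ∃ K : ℝ≥0∞, K ≠ ⊤ ∧ ∀ (L : ℝ) (x₀ : Eucl n) (D : Set (Eucl n)), IsCenteredJohn C L x₀ D →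
      WeakSobolevPoincare n κ δ τ p K L x₀ D := by
  have hp0 : 0 < p := one_pos.trans_le hp
  obtain ⟨K, hK, hweak⟩ := exists_weak_type_wolffPotential (μ := volume) (l := 1 - κ) hp0
    (by linarith) (by linarith) (sub_pos.2 hpn) (sub_lt_self _ (mul_pos hδ hp0))
    (volume_closedBall_le (n := n))
  refine ⟨K, hK, fun L x₀ D h u hu hul hfin s hs0 hs => ?_⟩
  have hsubset : {x | s ≤ ‖u x - ⨍ y in closedBall x₀ (κ * L), u y‖ₑ} ≤ᵐ[volume.restrict D]
      {x | s ≤ wolffPotential volume ((n : ℝ) - δ * p) p (1 - κ) (2 * L)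
        (chainDensity n κ δ τ p D u) x} := by
    filter_upwards [h.ae_enorm_sub_average_le_wolffPotential hC hτ hδ.le hp hκ0 hκ hκτ hul]
      with x hx hsx
    exact le_trans hsx hx
  have hL := h.length_pos
  exact (measure_mono_ae hsubset).trans <| (Measure.restrict_apply_le _ _).trans <|
    hweak (2 * L) _ s (by positivity) (measurable_chainDensity h.isOpen.measurableSet hu) hfin
      hs0 hs

lemma IsCenteredJohn.laverage_enorm_sub_average_le (h : IsCenteredJohn C L x₀ D) (hC : 0 < C)
    (hτ : τ ∈ Ioo (0 : ℝ) 1) (hδ : 0 ≤ δ) (hp : 1 ≤ p) (hκ0 : 0 < κ) (hκτ : 8 * C * κ ≤ τ)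
    (hu : LocallyIntegrable u) :
    ⨍⁻ y in closedBall x₀ (κ * L), ‖u y - ⨍ z in closedBall x₀ (κ * L), u z‖ₑ ∂volume ≤
      (ENNReal.ofReal (2 * L) ^ (-((n : ℝ) - δ * p)) *
        ∫⁻ y, chainDensity n κ δ τ p D u y) ^ (1 / p) := by
  have hr : 0 < κ * L := mul_pos hκ0 h.length_pos
  have : IsFiniteMeasure (volume.restrict (closedBall x₀ (κ * L))) :=
    isFiniteMeasure_restrict.2 measure_closedBall_lt_top.ne
  have hmeas : AEMeasurable (fun y => ‖u y - ⨍ z in closedBall x₀ (κ * L), u z‖ₑ)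
      (volume.restrict (closedBall x₀ (κ * L))) :=
    (hu.aestronglyMeasurable.aemeasurable.restrict.sub_const _).enorm
  rw [one_div, ENNReal.le_rpow_inv_iff (one_pos.trans_le hp)]
  refine (laverage_rpow_le hmeas hp).trans ?_
  refine (laverage_enorm_sub_average_rpow_le_chainDensity hτ hδ hp h.isOpen h.frontier_nonempty
    hu hκ0 h.length_pos h.center_mem
    (eight_mul_le_mul_infDist hC hκ0.le hκτ h.length_div_le_infDist_center) (by linarith)
    (by rw [dist_self]; linarith)).trans ?_
  gcongr
  exact Measure.restrict_le_self

lemma enorm_average_slice_abs_le {α : Type*} [MeasurableSpace α] {μ : Measure α} {s t : ℝ}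
    (hs : 0 ≤ s) (hst : s ≤ t) (v : α → ℝ) :
    ‖⨍ x, slice s t |v x| ∂μ‖ₑ ≤ ⨍⁻ x, ‖v x‖ₑ ∂μ := by
  refine (enorm_average_le _).trans (lintegral_mono fun x => ?_)
  rw [Real.enorm_of_nonneg (slice_nonneg hst _), Real.enorm_eq_ofReal_abs]
  exact ENNReal.ofReal_le_ofReal (slice_le_self hs (abs_nonneg _))

lemma half_le_enorm_slice_sub {s : ℝ≥0} {a m : ℝ} (ha : 2 * s ≤ |a|) (hm : ‖m‖ₑ ≤ (s / 2 : ℝ≥0∞)) :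
    (s / 2 : ℝ≥0∞) ≤ ‖slice s (2 * s) |a| - m‖ₑ := by
  have hs : (s : ℝ) ≤ 2 * s := by linarith [s.coe_nonneg]
  have hslice : ‖slice s (2 * s) |a|‖ₑ = s := by
    rw [slice_eq_sub hs ha, two_mul, add_sub_cancel_right, Real.enorm_of_nonneg s.coe_nonneg,
      ENNReal.ofReal_coe_nnreal]
  have htriangle : (s : ℝ≥0∞) ≤ ‖slice s (2 * s) |a| - m‖ₑ + s / 2 := by
    rw [← hslice]
    calc _ = ‖(slice s (2 * s) |a| - m) + m‖ₑ := by rw [sub_add_cancel]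
      _ ≤ ‖slice s (2 * s) |a| - m‖ₑ + ‖m‖ₑ := enorm_add_le _ _
      _ ≤ _ := by gcongr; rwa [hslice]
  refine (ENNReal.add_le_add_iff_right (a := (s : ℝ≥0∞) / 2) (by finiteness)).1 ?_
  rwa [ENNReal.add_halves]

lemma tsum_lintegral_chainDensity_slice_le {M : ℝ} (hM : 0 ≤ M) (hp : 1 ≤ p) (hκ : 0 < κ)
    (hD : MeasurableSet D) (hu : Measurable u) (b : ℝ) :
    ∑' k : ℕ, ∫⁻ y, chainDensity n κ δ τ p D
        (fun x => slice (M * 2 ^ k) (M * 2 ^ (k + 1)) |u x - b|) y ≤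
      ∫⁻ y, chainDensity n κ δ τ p D u y := by
  have hlevel : Monotone fun k : ℕ => M * 2 ^ k :=
    (pow_right_mono₀ one_le_two).const_mul hM
  simp_rw [lintegral_chainDensity hκ hD]
  rw [ENNReal.tsum_mul_left]
  gcongr
  refine tsum_fracEnergyTau_le hp hD
    (fun k => (measurable_slice _ _).comp (hu.sub_const b).abs) fun y z => ?_
  refine (tsum_enorm_slice_sub_slice_le hlevel _ _).trans ?_
  rw [Real.enorm_eq_ofReal_abs, Real.enorm_eq_ofReal_abs]
  exact ENNReal.ofReal_le_ofReal (by simpa using abs_abs_sub_abs_le_abs_sub (u y - b) (u z - b))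

lemma rpow_mul_volume_le (h : D ⊆ closedBall x₀ L) (hL : 0 < L) (hp : 0 < p) {β : ℝ} (hβ : 0 < β)
    (G : ℝ≥0∞) :
    (4 * (ENNReal.ofReal (2 * L) ^ (-β) * G) ^ (1 / p)) ^ (p * (n / β)) * volume D ≤
      4 ^ (p * (n / β)) * (volume.real (ball (0 : Eucl n) 1)).toNNReal * G ^ ((n : ℝ) / β) := by
  have h2L : ENNReal.ofReal (2 * L) ≠ 0 := by simp [hL]
  have hvol : volume D ≤ (volume.real (ball (0 : Eucl n) 1)).toNNReal *
      ENNReal.ofReal (2 * L) ^ (n : ℝ) :=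
    (measure_mono h).trans <| (volume_closedBall_le x₀ L hL).trans <| by gcongr; linarith
  have hpow : (4 * (ENNReal.ofReal (2 * L) ^ (-β) * G) ^ (1 / p)) ^ (p * (n / β)) =
      4 ^ (p * (n / β)) * (ENNReal.ofReal (2 * L) ^ (-(n : ℝ)) * G ^ ((n : ℝ) / β)) := by
    rw [ENNReal.mul_rpow_of_nonneg _ _ (by positivity), ← ENNReal.rpow_mul, ← mul_assoc,
      one_div_mul_cancel hp.ne', one_mul, ENNReal.mul_rpow_of_nonneg _ _ (by positivity),
      ← ENNReal.rpow_mul, neg_mul, mul_div_cancel₀ _ hβ.ne']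
  have hcancel : ENNReal.ofReal (2 * L) ^ (-(n : ℝ)) * ENNReal.ofReal (2 * L) ^ (n : ℝ) = 1 := by
    rw [← ENNReal.rpow_add _ _ h2L ENNReal.ofReal_ne_top, neg_add_cancel, ENNReal.rpow_zero]
  calc _ ≤ 4 ^ (p * (n / β)) * (ENNReal.ofReal (2 * L) ^ (-(n : ℝ)) * G ^ ((n : ℝ) / β)) *
        ((volume.real (ball (0 : Eucl n) 1)).toNNReal * ENNReal.ofReal (2 * L) ^ (n : ℝ)) := by
        rw [hpow]
        gcongr
    _ = 4 ^ (p * (n / β)) * (volume.real (ball (0 : Eucl n) 1)).toNNReal * G ^ ((n : ℝ) / β) *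
        (ENNReal.ofReal (2 * L) ^ (-(n : ℝ)) * ENNReal.ofReal (2 * L) ^ (n : ℝ)) := by ring
    _ = _ := by rw [hcancel, mul_one]

lemma locallyIntegrable_slice_abs {X : Type*} [TopologicalSpace X]
    [SecondCountableTopology X] [MeasurableSpace X] {μ : Measure X} {s t : ℝ} (hs : 0 ≤ s)
    (hst : s ≤ t) {v : X → ℝ} (hv : LocallyIntegrable v μ) :
    LocallyIntegrable (fun x => slice s t |v x|) μ := by
  refine hv.mono ((measurable_slice s t).comp_aemeasurable
    hv.aestronglyMeasurable.aemeasurable.abs).aestronglyMeasurable (.of_forall fun x => ?_)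
  rw [Real.norm_of_nonneg (slice_nonneg hst _)]
  exact slice_le_self hs (abs_nonneg _)

lemma WeakSobolevPoincare.volume_level_le {K : ℝ≥0∞}
    (hK : WeakSobolevPoincare n κ δ τ p K L x₀ D) (hp : 0 ≤ p) (hu : Measurable u)
    (hul : LocallyIntegrable u) {s : ℝ≥0} (hs : 0 < s)
    (haverage : ⨍⁻ y in closedBall x₀ (κ * L), ‖u y‖ₑ ∂volume ≤ s / 2)
    (hfin : ∫⁻ y, chainDensity n κ δ τ p D (fun x => slice s (2 * s) |u x|) y ≠ ⊤) :
    volume.restrict D {x | 2 * s ≤ ‖u x‖₊} ≤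
      K * ((2 ^ p * ∫⁻ y, chainDensity n κ δ τ p D (fun x => slice s (2 * s) |u x|) y) / s ^ p) ^
        ((n : ℝ) / (n - δ * p)) := by
  have hslice : (s : ℝ) ≤ 2 * s := by linarith [s.coe_nonneg]
  have hs0 : (s / 2 : ℝ≥0∞) ≠ 0 := by simp [hs.ne']
  have hweak := hK _ ((measurable_slice s (2 * s)).comp hu.abs)
    (locallyIntegrable_slice_abs s.coe_nonneg hslice hul) hfin (s / 2) hs0 (by finiteness)
  rw [div_div_two_rpow hp, ← mul_div_assoc] at hweak
  refine (measure_mono fun x hx => ?_).trans hweak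
  exact half_le_enorm_slice_sub (mod_cast (hx : 2 * s ≤ ‖u x‖₊)) <|
    (enorm_average_slice_abs_le s.coe_nonneg hslice u).trans haverage

lemma WeakSobolevPoincare.lintegral_rpow_le {K : ℝ≥0∞}
    (hK : WeakSobolevPoincare n κ δ τ p K L x₀ D) (hD : MeasurableSet D) (hp : 1 ≤ p)
    (hr : 1 ≤ (n : ℝ) / (n - δ * p)) (hκ : 0 < κ) (hu : Measurable u) (hul : LocallyIntegrable u)
    (hG : ∫⁻ y, chainDensity n κ δ τ p D u y ≠ ⊤) (b : ℝ) {M : ℝ≥0} (hM : 0 < M)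
    (haverage : ⨍⁻ y in closedBall x₀ (κ * L), ‖u y - b‖ₑ ∂volume ≤ M / 2) :
    ∫⁻ x in D, ‖u x - b‖ₑ ^ (p * (n / (n - δ * p))) ≤
      (2 * M) ^ (p * (n / (n - δ * p))) * volume D + K * 4 ^ (p * (n / (n - δ * p))) *
        (2 ^ p * ∫⁻ y, chainDensity n κ δ τ p D u y) ^ ((n : ℝ) / (n - δ * p)) := by
  set r : ℝ := n / (n - δ * p)
  have hp0 : 0 ≤ p := one_pos.le.trans hp
  let f (k : ℕ) (x : Eucl n) : ℝ := slice (M * 2 ^ k) (M * 2 ^ (k + 1)) |u x - b|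
  have hsum : ∑' k, ∫⁻ y, chainDensity n κ δ τ p D (f k) y ≤
      ∫⁻ y, chainDensity n κ δ τ p D u y :=
    tsum_lintegral_chainDensity_slice_le M.coe_nonneg hp hκ hD hu b
  have hfin (k : ℕ) : ∫⁻ y, chainDensity n κ δ τ p D (f k) y ≠ ⊤ :=
    ENNReal.ne_top_of_tsum_ne_top (ne_top_of_le_ne_top hG hsum) k
  have hlevel (k : ℕ) : volume.restrict D {x | M * 2 ^ (k + 1) ≤ ‖u x - b‖₊} ≤
      K * ((2 ^ p * ∫⁻ y, chainDensity n κ δ τ p D (f k) y) / (M * 2 ^ k) ^ p) ^ r := by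
    have hMk : M ≤ M * 2 ^ k := le_mul_of_one_le_right zero_le (one_le_pow₀ one_le_two)
    have hdouble : M * 2 ^ (k + 1) = 2 * (M * 2 ^ k) := by ring
    have hdouble' : (M * 2 ^ (k + 1) : ℝ) = 2 * (M * 2 ^ k : ℝ≥0) := by push_cast; ring
    have hbound := hK.volume_level_le hp0 (hu.sub_const b) (hul.sub (locallyIntegrable_const b))
      (hM.trans_le hMk) (haverage.trans (by gcongr)) (by simpa [f, hdouble'] using hfin k)
    simpa [f, hdouble, hdouble'] using hbound
  calc _ ≤ (2 * M) ^ (p * r) * volume.restrict D univ +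
        K * 4 ^ (p * r) * (∑' k, 2 ^ p * ∫⁻ y, chainDensity n κ δ τ p D (f k) y) ^ r :=
        lintegral_rpow_le_of_dyadic_weak_type (by fun_prop) hM hp0 hr hlevel
    _ ≤ _ := by
        rw [ENNReal.tsum_mul_left, Measure.restrict_apply_univ]
        gcongr

lemma IsCenteredJohn.lintegral_rpow_le_of_weakSobolevPoincare (h : IsCenteredJohn C L x₀ D)
    (hC : 0 < C) (hτ : τ ∈ Ioo (0 : ℝ) 1) (hδ : 0 ≤ δ) (hp : 1 ≤ p) (hpn : δ * p < n)
    (hκ : 0 < κ) (hκτ : 8 * C * κ ≤ τ) {K : ℝ≥0∞}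
    (hK : WeakSobolevPoincare n κ δ τ p K L x₀ D) (hu : Measurable u) (hul : LocallyIntegrable u)
    (hG0 : ∫⁻ y, chainDensity n κ δ τ p D u y ≠ 0)
    (hG : ∫⁻ y, chainDensity n κ δ τ p D u y ≠ ⊤) :
    ∫⁻ x in D, ‖u x - ⨍ y in closedBall x₀ (κ * L), u y‖ₑ ^ (p * (n / (n - δ * p))) ≤
      (4 ^ (p * (n / (n - δ * p))) * (volume.real (ball (0 : Eucl n) 1)).toNNReal +
        K * 4 ^ (p * (n / (n - δ * p))) * (2 ^ p) ^ ((n : ℝ) / (n - δ * p))) *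
        (∫⁻ y, chainDensity n κ δ τ p D u y) ^ ((n : ℝ) / (n - δ * p)) := by
  have hp0 : 0 < p := one_pos.trans_le hp
  have hβ : 0 < (n : ℝ) - δ * p := sub_pos.2 hpn
  have hr : 1 ≤ (n : ℝ) / (n - δ * p) := (one_le_div hβ).2 (sub_le_self _ (by positivity))
  set b := ⨍ y in closedBall x₀ (κ * L), u y
  set G := ∫⁻ y, chainDensity n κ δ τ p D u y
  have hL0 : ENNReal.ofReal (2 * L) ≠ 0 := by
    simpa only [ne_eq, ENNReal.ofReal_eq_zero, not_le] using mul_pos two_pos h.length_pos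
  obtain ⟨M, hM⟩ : ∃ M : ℝ≥0, (M : ℝ≥0∞) =
      2 * (ENNReal.ofReal (2 * L) ^ (-((n : ℝ) - δ * p)) * G) ^ (1 / p) :=
    ⟨_, ENNReal.coe_toNNReal (by finiteness)⟩
  have hM0 : 0 < M := by
    have hLβ := ENNReal.rpow_pos (p := -((n : ℝ) - δ * p)) (pos_iff_ne_zero.2 hL0)
      ENNReal.ofReal_ne_top
    rw [← ENNReal.coe_pos, hM]
    exact ENNReal.mul_pos two_ne_zero (ENNReal.rpow_pos (ENNReal.mul_pos hLβ.ne' hG0)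
      (by finiteness)).ne'
  have haverage : ⨍⁻ y in closedBall x₀ (κ * L), ‖u y - b‖ₑ ∂volume ≤ M / 2 := by
    rw [hM, mul_div_assoc, ENNReal.mul_div_cancel two_ne_zero ENNReal.ofNat_ne_top]
    exact h.laverage_enorm_sub_average_le hC hτ hδ hp hκ hκτ hul
  refine (hK.lintegral_rpow_le h.isOpen.measurableSet hp hr hκ hu hul hG b hM0 haverage).trans ?_
  have hfour : (2 * M : ℝ≥0∞) =
      4 * (ENNReal.ofReal (2 * L) ^ (-((n : ℝ) - δ * p)) * G) ^ (1 / p) := by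
    rw [hM, ← mul_assoc, show (2 * 2 : ℝ≥0∞) = 4 by norm_num]
  rw [ENNReal.mul_rpow_of_nonneg _ _ (one_pos.le.trans hr), add_mul, ← mul_assoc, hfour]
  exact add_le_add_left (rpow_mul_volume_le h.subset_closedBall h.length_pos hp0 hβ G) _

theorem IsCenteredJohn.exists_strong_type (hC : 0 < C) (hτ : τ ∈ Ioo (0 : ℝ) 1) (hδ : 0 < δ)
    (hp : 1 ≤ p) (hpn : δ * p < n) (hκ0 : 0 < κ) (hκ : κ ≤ 1 / 2) (hκτ : 8 * C * κ ≤ τ) :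
    ∃ K : ℝ≥0∞, K ≠ ⊤ ∧ ∀ (L : ℝ) (x₀ : Eucl n) (D : Set (Eucl n)), IsCenteredJohn C L x₀ D →
      ∀ u : Eucl n → ℝ, Measurable u → LocallyIntegrable u →
        ∫⁻ y, chainDensity n κ δ τ p D u y ≠ ⊤ →
          ∫⁻ x in D, ‖u x - ⨍ y in closedBall x₀ (κ * L), u y‖ₑ ^ (p * (n / (n - δ * p))) ≤
            K * (∫⁻ y, chainDensity n κ δ τ p D u y) ^ ((n : ℝ) / (n - δ * p)) := by
  obtain ⟨K, hK, hweak⟩ :=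
    IsCenteredJohn.exists_weakSobolevPoincare (n := n) hC hτ hδ hp hpn hκ0 hκ hκτ
  have hp0 : 0 < p := one_pos.trans_le hp
  have hr : 0 < (n : ℝ) / (n - δ * p) :=
    div_pos ((mul_pos hδ hp0).trans hpn) (sub_pos.2 hpn)
  refine ⟨_, by finiteness, fun L x₀ D h u hu hul hG =>
    (eq_or_ne (∫⁻ y, chainDensity n κ δ τ p D u y) 0).elim (fun hG0 => ?_) fun hG0 =>
      h.lintegral_rpow_le_of_weakSobolevPoincare hC hτ hδ.le hp hpn hκ0 hκτ (hweak L x₀ D h) hu hul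
        hG0 hG⟩
  refine (lintegral_eq_zero_of_ae_eq_zero ?_).trans_le zero_le
  filter_upwards [h.ae_enorm_sub_average_le_wolffPotential hC hτ hδ.le hp hκ0 hκ hκτ hul]
    with x hx
  rw [wolffPotential_eq_zero hp0 hG0, nonpos_iff_eq_zero] at hx
  simp [hx, mul_pos hp0 hr]

end StrongType

section SobolevPoincare

variable {n : ℕ} {δ τ p : ℝ}

lemma fracEnergyTau_congr_ae {D : Set (Eucl n)} {u w : Eucl n → ℝ} (hτ : τ ∈ Ioo (0 : ℝ) 1)
    (hD : IsOpen D) (hfr : (frontier D).Nonempty) (huw : u =ᵐ[volume.restrict D] w) :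
    fracEnergyTau n δ τ p D u = fracEnergyTau n δ τ p D w := by
  refine lintegral_congr_ae ?_
  filter_upwards [huw, ae_restrict_mem hD.measurableSet] with y hy hyD
  refine lintegral_congr_ae ?_
  filter_upwards [ae_restrict_of_ae_restrict_of_subset (tauBall_subset hτ hD hfr hyD) huw] with z hz
  rw [fracKernel, fracKernel, hy, hz]

lemma exists_measurable_integrable_ae_eq_restrict {α : Type*} [MeasurableSpace α] {μ : Measure α}
    {s : Set α} {u : α → ℝ} (hs : MeasurableSet s) (hu : IntegrableOn u s μ) :
    ∃ w : α → ℝ, Measurable w ∧ Integrable w μ ∧ u =ᵐ[μ.restrict s] w := by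
  refine ⟨s.indicator (hu.1.mk u), hu.1.stronglyMeasurable_mk.measurable.indicator hs,
    (integrable_indicator_iff hs).2 (hu.congr hu.1.ae_eq_mk), ?_⟩
  exact hu.1.ae_eq_mk.trans (indicator_ae_eq_restrict hs).symm

theorem IsCenteredJohn.exists_sobolevPoincare {C : ℝ} (hC : 1 ≤ C) (hτ : τ ∈ Ioo (0 : ℝ) 1)
    (hδ : 0 < δ) (hp : 1 ≤ p) (hpn : δ * p < n) :
    ∃ K : ℝ≥0∞, K ≠ ⊤ ∧ ∀ (L : ℝ) (x₀ : Eucl n) (D : Set (Eucl n)), IsCenteredJohn C L x₀ D →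
      ∀ u : Eucl n → ℝ, IntegrableOn u D → fracEnergyTau n δ τ p D u ≠ ⊤ →
        ∫⁻ x in D, ‖u x - ⨍ y in D, u y‖ₑ ^ (p * (n / (n - δ * p))) ≤
          K * fracEnergyTau n δ τ p D u ^ ((n : ℝ) / (n - δ * p)) := by
  have hκ0 : 0 < τ / (8 * C) := div_pos hτ.1 (by positivity)
  have hκτ : 8 * C * (τ / (8 * C)) = τ := mul_div_cancel₀ _ (by positivity)
  obtain ⟨K, hK, hstrong⟩ := IsCenteredJohn.exists_strong_type (n := n) (one_pos.trans_le hC) hτ hδ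
    hp hpn hκ0 (by nlinarith [hτ.2]) hκτ.le
  have hβ : 0 < (n : ℝ) - δ * p := sub_pos.2 hpn
  have hr : 1 ≤ (n : ℝ) / (n - δ * p) := (one_le_div hβ).2 (sub_le_self _ (by positivity))
  have hκ0' : ENNReal.ofReal (τ / (8 * C) / 2) ≠ 0 := by simpa using hκ0
  refine ⟨2 ^ (p * (n / (n - δ * p))) * (K * (poincareConst n (δ * p) *
    ENNReal.ofReal (τ / (8 * C) / 2) ^ (-((n : ℝ) - δ * p))) ^ ((n : ℝ) / (n - δ * p))),
    by finiteness, fun L x₀ D h u hu hE => ?_⟩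
  have hDm := h.isOpen.measurableSet
  have : IsFiniteMeasure (volume.restrict D) := isFiniteMeasure_restrict.2
    ((measure_mono h.subset_closedBall).trans_lt measure_closedBall_lt_top).ne
  obtain ⟨w, hwm, hwi, huw⟩ := exists_measurable_integrable_ae_eq_restrict hDm hu
  rw [fracEnergyTau_congr_ae hτ h.isOpen h.frontier_nonempty huw] at hE ⊢
  have hG := lintegral_chainDensity (δ := δ) (τ := τ) (p := p) (u := w) hκ0 hDm
  calc _ = ∫⁻ x in D, ‖w x - ⨍ y in D, w y‖ₑ ^ (p * (n / (n - δ * p))) := by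
        rw [average_congr huw]
        exact lintegral_congr_ae (huw.mono fun x hx => by simp only [hx])
    _ ≤ 2 ^ (p * (n / (n - δ * p))) *
        (K * (∫⁻ y, chainDensity n (τ / (8 * C)) δ τ p D w y) ^ ((n : ℝ) / (n - δ * p))) :=
        (lintegral_enorm_sub_average_rpow_le hwi.integrableOn _
          (one_le_mul_of_one_le_of_one_le hp hr)).trans <| by
          gcongr
          exact hstrong L x₀ D h w hwm hwi.locallyIntegrable (by rw [hG]; finiteness)
    _ = _ := by rw [hG, ENNReal.mul_rpow_of_nonneg _ _ (one_pos.le.trans hr)]; ring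

end SobolevPoincare

theorem statement0_general (n : ℕ) (c : ℝ) (hc : 1 ≤ c) (τ δ p : ℝ) (hτ : τ ∈ Ioo (0 : ℝ) 1)
    (hδ : 0 < δ) (hp : 1 ≤ p) (hpn : p < n / δ) :
    ∃ C : ℝ, 0 < C ∧
      ∀ D : Set (Eucl n), IsJohnDomain n c D → Bornology.IsBounded D →
        ∀ u : Eucl n → ℝ, IntegrableOn u D volume →
          ∫⁻ x in D, ENNReal.ofReal
              (|u x - ⨍ y in D, u y| ^ ((n : ℝ) * p / ((n : ℝ) - δ * p))) ≤
            ENNReal.ofReal C * fracEnergyTau n δ τ p D u ^ ((n : ℝ) / ((n : ℝ) - δ * p)) := by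
  have hpn' : δ * p < n := (lt_div_iff₀' hδ).1 hpn
  have hn : (0 : ℝ) < n := by nlinarith
  have hr : 0 < (n : ℝ) / (n - δ * p) := div_pos hn (sub_pos.2 hpn')
  obtain ⟨K, hK, hpoincare⟩ :=
    IsCenteredJohn.exists_sobolevPoincare (n := n) (C := 4 * c ^ 2) (by nlinarith) hτ hδ hp hpn'
  refine ⟨K.toReal + 1, by positivity, fun D hD hb u hu => ?_⟩
  obtain ⟨L, x₀, h⟩ := hD.exists_isCenteredJohn (mod_cast hn) hc hb
  rcases eq_or_ne (fracEnergyTau n δ τ p D u) ⊤ with hE | hE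
  · have hC : ENNReal.ofReal (K.toReal + 1) ≠ 0 := (ENNReal.ofReal_pos.2 (by positivity)).ne'
    rw [hE, ENNReal.top_rpow_of_pos hr, ENNReal.mul_top hC]
    exact le_top
  · calc _ = ∫⁻ x in D, ‖u x - ⨍ y in D, u y‖ₑ ^ (p * (n / (n - δ * p))) := by
          rw [mul_comm (n : ℝ) p, mul_div_assoc]
          simp_rw [Real.enorm_eq_ofReal_abs,
            ENNReal.ofReal_rpow_of_nonneg (abs_nonneg _) (mul_pos (one_pos.trans_le hp) hr).le]
      _ ≤ K * fracEnergyTau n δ τ p D u ^ ((n : ℝ) / (n - δ * p)) := hpoincare L x₀ D h u hu hE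
      _ ≤ _ := by
          gcongr
          exact ENNReal.le_ofReal_iff_toReal_le hK (by positivity) |>.2 (by linarith)

/-- Fractional Sobolev–Poincaré inequality in bounded John domains:
for a bounded `c`-John domain `D ⊆ ℝⁿ`, `n ≥ 2`, `τ, δ ∈ (0,1)`, `1 ≤ p < n/δ`, there
is `C = C(δ,τ,p,n,c) > 0` with
`∫_D |u - u_D|^{np/(n-δp)} ≤ C (|u|_{W^{δ,p}_τ(D)}^p)^{n/(n-δp)}` for all `u ∈ L¹(D)`. -/
theorem statement0 (n : ℕ) (hn : 2 ≤ n) (c : ℝ) (hc : 1 ≤ c)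
    (τ δ p : ℝ) (hτ : τ ∈ Ioo (0:ℝ) 1) (hδ : δ ∈ Ioo (0:ℝ) 1)
    (hp : 1 ≤ p) (hpn : p < n / δ) :
    ∃ C : ℝ, 0 < C ∧
      ∀ D : Set (Eucl n), IsJohnDomain n c D → Bornology.IsBounded D →
        ∀ u : Eucl n → ℝ, IntegrableOn u D volume →
          (∫⁻ x in D, ENNReal.ofReal
              (|u x - ⨍ y in D, u y ∂volume| ^ ((n:ℝ) * p / ((n:ℝ) - δ * p))) ∂volume)
            ≤ ENNReal.ofReal C * fracEnergyTau n δ τ p D u ^ ((n:ℝ) / ((n:ℝ) - δ * p)) :=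
  statement0_general n c hc τ δ p hτ hδ.1 hp hpn
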